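/- arXiv:2504.10992 — 10 statements merged into one kernel-verified Lean document; each statement's English description precedes it below -/
import Mathlib

section
/- For every nonzero integer A and every integer ℓ with ℓ ≠ 0 and ℓ ≠ 1, setting m = 3ℓ(1−ℓ), the set of pairs of rational numbers (x, y) ∈ ℚ × ℚ satisfying (x² − A²)(y² − A²) = m·x²·y² is infinite. -/
/-!
After rescaling `x` and `y` by `A`, the equation becomes that of the Edwards curve
`x² + y² = 1 + c x² y²` with `c = 1 - m`. If `c` is `2`-integral, a point with `|x|₂ < 1` has
`|y|₂ = 1`, so that the doubling formula `x ↦ 2xy / (1 + c x² y²)` of the Edwards group law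
multiplies `|x|₂` by exactly `|2|₂`. Such points with `x ≠ 0` are therefore infinite in number as
soon as there is one, and the shape of `m` is what puts `(2, 1 / (2ℓ - 1))` on the curve.
-/

section EdwardsCurve

variable {K : Type*} [Field K]

/-- The affine Edwards curve `x² + y² = 1 + c x² y²`, as its set of `K`-points. -/
def edwardsCurve (c : K) : Set (K × K) :=
  {p | p.1 ^ 2 + p.2 ^ 2 = 1 + c * p.1 ^ 2 * p.2 ^ 2}

/-- Doubling in the group law of the Edwards curve with parameter `c`. The formula is meaningful
only where neither denominator vanishes. -/
def edwardsDouble (c : K) (p : K × K) : K × K :=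
  (2 * p.1 * p.2 / (1 + c * p.1 ^ 2 * p.2 ^ 2),
    (p.2 ^ 2 - p.1 ^ 2) / (1 - c * p.1 ^ 2 * p.2 ^ 2))

theorem edwardsDouble_mem_edwardsCurve {c : K} {p : K × K} (hp : p ∈ edwardsCurve c)
    (h_add : 1 + c * p.1 ^ 2 * p.2 ^ 2 ≠ 0) (h_sub : 1 - c * p.1 ^ 2 * p.2 ^ 2 ≠ 0) :
    edwardsDouble c p ∈ edwardsCurve c := by
  obtain ⟨x, y⟩ := p
  simp only [edwardsCurve, edwardsDouble, Set.mem_ofPred_eq] at hp h_add h_sub ⊢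
  set t := c * x ^ 2 * y ^ 2 with ht
  field_simp
  linear_combination (1 - t) ^ 2 * (x ^ 2 + y ^ 2 + 1 + t) * hp + 4 * (y ^ 2 - x ^ 2) ^ 2 * ht

theorem mk_two_inv_mem_edwardsCurve {ℓ : K} (hℓ : 2 * ℓ - 1 ≠ 0) :
    (2, (2 * ℓ - 1)⁻¹) ∈ edwardsCurve (1 - 3 * ℓ * (1 - ℓ)) := by
  simp only [edwardsCurve, Set.mem_ofPred_eq]
  field_simp
  ring

/-- The affine part of the fiber over `[z : t] = [1 : 0]` of the Markoff-type K3 surface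
`(x² - A²)(y² - A²)(z² - A²) = m (xyz + C)² + B`, as its set of `K`-points. It does not depend on
`B` and `C`. -/
def markoffFiberAtInfinity (A m : K) : Set (K × K) :=
  {p | (p.1 ^ 2 - A ^ 2) * (p.2 ^ 2 - A ^ 2) = m * p.1 ^ 2 * p.2 ^ 2}

theorem smul_mem_markoffFiberAtInfinity (A : K) {m : K} {p : K × K}
    (hp : p ∈ edwardsCurve (1 - m)) : A • p ∈ markoffFiberAtInfinity A m := by
  simp only [edwardsCurve, Set.mem_ofPred_eq] at hp
  simp only [markoffFiberAtInfinity, Set.mem_ofPred_eq, Prod.smul_fst, Prod.smul_snd, smul_eq_mul]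
  linear_combination -A ^ 4 * hp

section Valuation

variable {Γ₀ : Type*} [LinearOrderedCommGroupWithZero Γ₀] (v : Valuation K Γ₀) {c : K} {p : K × K}

theorem valuation_mul_sq_lt_one {x : K} (hc : v c ≤ 1) (hx : v x < 1) : v (c * x ^ 2) < 1 := by
  rw [map_mul, map_pow]
  exact mul_lt_one_of_nonneg_of_lt_one_right hc zero_le (pow_lt_one₀ zero_le hx two_ne_zero)

theorem valuation_snd_eq_one_of_mem_edwardsCurve (hc : v c ≤ 1) (hp : p ∈ edwardsCurve c)
    (hx : v p.1 < 1) : v p.2 = 1 := by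
  have hnum : v (1 - p.1 ^ 2) = 1 :=
    v.map_one_sub_of_lt (by simpa only [one_mul] using valuation_mul_sq_lt_one v v.map_one.le hx)
  have hden : v (1 - c * p.1 ^ 2) = 1 :=
    v.map_one_sub_of_lt (valuation_mul_sq_lt_one v hc hx)
  have hy_sq_mul : p.2 ^ 2 * (1 - c * p.1 ^ 2) = 1 - p.1 ^ 2 := by
    simp only [edwardsCurve, Set.mem_ofPred_eq] at hp
    linear_combination hp
  have hy_sq : v p.2 ^ 2 = 1 := by
    simpa only [map_mul, map_pow, hnum, hden, mul_one] using congrArg v hy_sq_mul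
  exact (pow_eq_one_iff_of_nonneg zero_le two_ne_zero).1 hy_sq

theorem valuation_mul_sq_mul_sq_lt_one_of_mem_edwardsCurve (hc : v c ≤ 1)
    (hp : p ∈ edwardsCurve c) (hx : v p.1 < 1) : v (c * p.1 ^ 2 * p.2 ^ 2) < 1 := by
  have hy := valuation_snd_eq_one_of_mem_edwardsCurve v hc hp hx
  simpa only [map_mul _ (c * p.1 ^ 2), map_pow _ p.2, hy, one_pow, mul_one] using
    valuation_mul_sq_lt_one v hc hx

theorem edwardsDouble_mem_edwardsCurve_of_valuation_lt_one (hc : v c ≤ 1)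
    (hp : p ∈ edwardsCurve c) (hx : v p.1 < 1) : edwardsDouble c p ∈ edwardsCurve c := by
  have hcxy := valuation_mul_sq_mul_sq_lt_one_of_mem_edwardsCurve v hc hp hx
  refine edwardsDouble_mem_edwardsCurve hp (v.ne_zero_iff.1 ?_) (v.ne_zero_iff.1 ?_)
  · exact (v.map_one_add_of_lt hcxy).trans_ne one_ne_zero
  · exact (v.map_one_sub_of_lt hcxy).trans_ne one_ne_zero

theorem valuation_edwardsDouble_fst (hc : v c ≤ 1) (hp : p ∈ edwardsCurve c) (hx : v p.1 < 1) :
    v (edwardsDouble c p).1 = v 2 * v p.1 := by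
  have hy := valuation_snd_eq_one_of_mem_edwardsCurve v hc hp hx
  have hden : v (1 + c * p.1 ^ 2 * p.2 ^ 2) = 1 :=
    v.map_one_add_of_lt (valuation_mul_sq_mul_sq_lt_one_of_mem_edwardsCurve v hc hp hx)
  simp only [edwardsDouble, map_div₀, map_mul, hden, hy, mul_one, div_one]

theorem infinite_edwardsCurve (h2 : (2 : K) ≠ 0) (hv2 : v 2 < 1) (hc : v c ≤ 1)
    (hp : p ∈ edwardsCurve c) (hx0 : p.1 ≠ 0) (hx : v p.1 < 1) : (edwardsCurve c).Infinite := by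
  intro hfinite
  obtain ⟨q, ⟨hq, hq0, hq1⟩, hmin⟩ :=
    Set.exists_min_image {q ∈ edwardsCurve c | q.1 ≠ 0 ∧ v q.1 < 1} (fun q ↦ v q.1)
      (hfinite.subset (Set.sep_subset _ _)) ⟨p, hp, hx0, hx⟩
  have hdouble := valuation_edwardsDouble_fst v hc hq hq1
  have hlt : v (edwardsDouble c q).1 < v q.1 := by
    rw [hdouble]
    exact mul_lt_of_lt_one_left (v.pos_iff.2 hq0) hv2
  have hdouble_ne_zero : (edwardsDouble c q).1 ≠ 0 := by
    rw [← v.ne_zero_iff, hdouble]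
    exact mul_ne_zero (v.ne_zero_iff.2 h2) (v.ne_zero_iff.2 hq0)
  exact (hmin _ ⟨edwardsDouble_mem_edwardsCurve_of_valuation_lt_one v hc hq hq1,
    hdouble_ne_zero, hlt.trans hq1⟩).not_gt hlt

end Valuation

end EdwardsCurve

theorem stmt1_general {K Γ₀ : Type*} [Field K] [LinearOrderedCommGroupWithZero Γ₀]
    (v : Valuation K Γ₀) (h2 : (2 : K) ≠ 0) (hv2 : v 2 < 1) {A ℓ : K} (hA : A ≠ 0)
    (hℓ : v ℓ ≤ 1) : (markoffFiberAtInfinity A (3 * ℓ * (1 - ℓ))).Infinite := by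
  have hc : 1 - 3 * ℓ * (1 - ℓ) ∈ v.integer :=
    sub_mem (one_mem _) (mul_mem (mul_mem (ofNat_mem _ 3) hℓ) (sub_mem (one_mem _) hℓ))
  have h2ℓ : v (2 * ℓ) < 1 := by
    simpa only [map_mul] using mul_lt_one_of_nonneg_of_lt_one_left zero_le hv2 hℓ
  have hne : 2 * ℓ - 1 ≠ 0 := by
    intro h
    simp [sub_eq_zero.1 h] at h2ℓ
  have hcurve := infinite_edwardsCurve v h2 hv2 hc (mk_two_inv_mem_edwardsCurve hne) h2 hv2
  exact Set.infinite_of_injOn_mapsTo (smul_right_injective _ hA).injOn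
    (fun _ hp ↦ smul_mem_markoffFiberAtInfinity A hp) hcurve

/-- For every nonzero integer `A` and every integer `ℓ ∉ {0,1}`, with
`m = 3ℓ(1−ℓ)`, the set of `(x, y) ∈ ℚ × ℚ` with `(x² − A²)(y² − A²) = m·x²·y²` is infinite. -/
theorem stmt1 (A : ℤ) (hA : A ≠ 0) (ℓ : ℤ) (hℓ0 : ℓ ≠ 0) (hℓ1 : ℓ ≠ 1) :
    {p : ℚ × ℚ | (p.1 ^ 2 - (A : ℚ) ^ 2) * (p.2 ^ 2 - (A : ℚ) ^ 2) =
      (3 * (ℓ : ℚ) * (1 - (ℓ : ℚ))) * p.1 ^ 2 * p.2 ^ 2}.Infinite :=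
  stmt1_general (Rat.padicValuation 2) two_ne_zero
    (Int.padicValuation_lt_one_iff (p := 2).2 dvd_rfl) (Int.cast_ne_zero.2 hA)
    (Int.padicValuation_le_one 2 ℓ)
end

section
/- Let A, B, C be nonzero integers and let m be an integer with m ≠ 0 and m ≠ 1 such that −m·B is not the square of any integer. Set a = 1−m, b = −A², c = −2mC, d = A⁴, e = −(A⁶ + mC² + B). Then: (i) for all x, y, z one has the polynomial identity (x²−A²)(y²−A²)(z²−A²) − m(xyz+C)² − B = a·x²y²z² + b·(x²y² + x²z² + y²z²) + c·xyz + d·(x²+y²+z²) + e; and (ii) these coefficients satisfy the non-degeneracy conditions c ≠ 0, a·d ≠ b², and b·e ≠ d². -/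
section CommRing

variable {R : Type*} [CommRing R]

theorem markoffK3_eq_normalForm (A B C m x y z : R) :
    (x ^ 2 - A ^ 2) * (y ^ 2 - A ^ 2) * (z ^ 2 - A ^ 2) - m * (x * y * z + C) ^ 2 - B =
      (1 - m) * x ^ 2 * y ^ 2 * z ^ 2 +
        -A ^ 2 * (x ^ 2 * y ^ 2 + x ^ 2 * z ^ 2 + y ^ 2 * z ^ 2) +
        -(2 * m * C) * (x * y * z) + A ^ 4 * (x ^ 2 + y ^ 2 + z ^ 2) +
        -(A ^ 6 + m * C ^ 2 + B) := by
  ring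

theorem mul_sq_add_ne_zero_of_not_isSquare {m B : R} (hsq : ¬IsSquare (-(m * B))) (C : R) :
    m * C ^ 2 + B ≠ 0 := by
  intro hzero
  have neg_mul_eq_sq : -(m * B) = (m * C) ^ 2 := by linear_combination -m * hzero
  exact hsq (neg_mul_eq_sq ▸ IsSquare.sq (m * C))

variable [NoZeroDivisors R]

theorem one_sub_mul_pow_four_ne_neg_sq_sq {A m : R} (hA : A ≠ 0) (hm : m ≠ 0) :
    (1 - m) * A ^ 4 ≠ (-A ^ 2) ^ 2 := by
  have sub_eq : (1 - m) * A ^ 4 - (-A ^ 2) ^ 2 = -(m * A ^ 4) := by ring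
  rw [← sub_ne_zero, sub_eq]
  exact neg_ne_zero.mpr (mul_ne_zero hm (pow_ne_zero 4 hA))

theorem neg_sq_mul_neg_pow_six_add_ne_pow_four_sq {A k : R} (hA : A ≠ 0) (hk : k ≠ 0) :
    -A ^ 2 * -(A ^ 6 + k) ≠ (A ^ 4) ^ 2 := by
  have sub_eq : -A ^ 2 * -(A ^ 6 + k) - (A ^ 4) ^ 2 = A ^ 2 * k := by ring
  rw [← sub_ne_zero, sub_eq]
  exact mul_ne_zero (pow_ne_zero 2 hA) hk

theorem stmt2_general [NeZero (2 : R)] {A B C m : R} (hA : A ≠ 0) (hC : C ≠ 0)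
    (hsq : ¬IsSquare (-(m * B))) {a b c d e : R} (ha : a = 1 - m) (hb : b = -A ^ 2)
    (hc : c = -(2 * m * C)) (hd : d = A ^ 4) (he : e = -(A ^ 6 + m * C ^ 2 + B)) :
    (∀ x y z : R,
      (x ^ 2 - A ^ 2) * (y ^ 2 - A ^ 2) * (z ^ 2 - A ^ 2) - m * (x * y * z + C) ^ 2 - B =
        a * x ^ 2 * y ^ 2 * z ^ 2 + b * (x ^ 2 * y ^ 2 + x ^ 2 * z ^ 2 + y ^ 2 * z ^ 2) +
          c * (x * y * z) + d * (x ^ 2 + y ^ 2 + z ^ 2) + e) ∧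
    c ≠ 0 ∧ a * d ≠ b ^ 2 ∧ b * e ≠ d ^ 2 := by
  subst ha hb hc hd he
  have hm : m ≠ 0 := by
    rintro rfl
    simp at hsq
  refine ⟨markoffK3_eq_normalForm A B C m, ?_, one_sub_mul_pow_four_ne_neg_sq_sq hA hm, ?_⟩
  · exact neg_ne_zero.mpr (mul_ne_zero (mul_ne_zero two_ne_zero hm) hC)
  · rw [add_assoc]
    exact neg_sq_mul_neg_pow_six_add_ne_pow_four_sq hA
      (mul_sq_add_ne_zero_of_not_isSquare hsq C)

end CommRing

/-- For nonzero integers `A, B, C` and `m ∉ {0,1}` with `−mB` not a square,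
setting `a = 1−m`, `b = −A²`, `c = −2mC`, `d = A⁴`, `e = −(A⁶ + mC² + B)`, the Markoff-type
K3 equation agrees with the normal form `a x²y²z² + b(x²y²+x²z²+y²z²) + c xyz + d(x²+y²+z²) + e`,
and the non-degeneracy conditions `c ≠ 0`, `ad ≠ b²`, `be ≠ d²` hold. -/
theorem stmt2 (A B C m : ℤ) (hA : A ≠ 0) (hB : B ≠ 0) (hC : C ≠ 0)
    (hm0 : m ≠ 0) (hm1 : m ≠ 1) (hsq : ∀ n : ℤ, -(m * B) ≠ n ^ 2)
    (a b c d e : ℤ) (ha : a = 1 - m) (hb : b = -A ^ 2) (hc : c = -(2 * m * C))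
    (hd : d = A ^ 4) (he : e = -(A ^ 6 + m * C ^ 2 + B)) :
    (∀ x y z : ℤ,
      (x ^ 2 - A ^ 2) * (y ^ 2 - A ^ 2) * (z ^ 2 - A ^ 2) - m * (x * y * z + C) ^ 2 - B =
        a * x ^ 2 * y ^ 2 * z ^ 2 + b * (x ^ 2 * y ^ 2 + x ^ 2 * z ^ 2 + y ^ 2 * z ^ 2) +
          c * (x * y * z) + d * (x ^ 2 + y ^ 2 + z ^ 2) + e) ∧
    c ≠ 0 ∧ a * d ≠ b ^ 2 ∧ b * e ≠ d ^ 2 :=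
  stmt2_general hA hC (by simpa only [isSquare_iff_exists_sq, not_exists] using hsq)
    ha hb hc hd he
end

section
/- Let P = 2³·3·5·7·11·13·31·433·2017·3253·8501·32687·46649·4057231, and let k be an integer with k > 0 and k ≡ 1 (mod P). Then: (i) there exist real numbers x, y, z with (x²−36)(y²−36)(z²−36) + 468·(xyz−4330)² = k; and (ii) for every prime number p there exist p-adic integers x, y, z ∈ ℤ_p with (x²−36)(y²−36)(z²−36) + 468·(xyz−4330)² = k. -/
/-!
On the plane `z = 0` the equation `F = k` becomes `(x² - 36)(y² - 36) = c` with
`c = (468 · 4330² - k) / 36`, and this genus-one curve already carries the solutions over `ℝ` and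
over `ℤ_p` for `p ≥ 11`. Over `𝔽_q` it amounts to finding `y` with `y² ≠ 36` for which the quartic
`f = (y² - 36)(y² - b)`, `b = 36 - c / 36`, takes a square value; such a point is smooth after
possibly exchanging the coordinates, so Hensel's lemma lifts it.

That `y` comes from a variant of Stepanov's method. Let `f = R S` have degree at most `4`, with
`R W = X^q - X`. If `f` took only non-square values off the roots of `R`, then `W` would divide
`f^((q-1)/2) + 1`. Differentiating twice, and using that `f^((q-1)/2)` satisfies the differential
equation `2 f u' = -f' u`, yields a polynomial of degree at most `6` divisible by `W`. It therefore
vanishes, and its vanishing says that `S` divides `f'²`, which is impossible for separable `f` and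
nonconstant `S`.

At `2` and `3` Hensel's lemma lifts the point `(1, 1, 1)`, where `F ≡ 1 (mod 24)`; at `5` and `7`
every residue class is the value of `F` at a smooth point, found by enumeration.
-/

open Polynomial

section Stepanov

section Derivative

variable {A : Type*} [CommRing A]

/-- The cofactor of `W` in Stepanov's first-order relation: if `R W = X^q - X` and
`W g - 1 = (R S)^((q-1)/2)`, then `W` times this polynomial is `2 S g + (R S)'`. -/
noncomputable def stepanovCofactor (R S g : A[X]) : A[X] :=
  2 * (R * S) * derivative g + derivative (R * S) * g - 2 * S * derivative R * g

/-- The expression `2 f f'' + 4 T - f'²` produced by the second differentiation in Stepanov's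
method. -/
noncomputable def stepanovResidual (f T : A[X]) : A[X] :=
  2 * f * derivative (derivative f) + 4 * T - derivative f ^ 2

variable {R S W g : A[X]}

theorem two_mul_mul_add_derivative_eq_mul_stepanovCofactor (hW : derivative (R * W) = -1)
    (hg : 2 * (R * S) * derivative (W * g) = -derivative (R * S) * (W * g - 1)) :
    2 * S * g + derivative (R * S) = W * stepanovCofactor R S g := by
  rw [derivative_mul] at hW
  rw [derivative_mul (f := W)] at hg
  rw [stepanovCofactor]
  linear_combination 2 * S * g * hW - hg

theorem dvd_stepanovResidual (hW : derivative (R * W) = -1)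
    (hg : 2 * S * g + derivative (R * S) = W * stepanovCofactor R S g) :
    W ∣ stepanovResidual (R * S) (S * stepanovCofactor R S g) := by
  set h := stepanovCofactor R S g with hh
  have hg' := congrArg derivative hg
  simp only [stepanovCofactor, stepanovResidual, derivative_add, derivative_mul,
    derivative_ofNat] at hg' hh hg hW ⊢
  refine ⟨2 * (R * S) * derivative h - 2 * S * derivative R * h -
    (derivative R * S + R * derivative S) * h, ?_⟩
  linear_combination 2 * (R * S) * hg' + 2 * S * hh + 2 * S * h * hW -
    (derivative R * S + R * derivative S) * hg

theorem natDegree_stepanovResidual_le_six {f T : A[X]} (hf : f.natDegree ≤ 4)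
    (hT : T.natDegree ≤ 6) : (stepanovResidual f T).natDegree ≤ 6 := by
  have degf' : (derivative f).natDegree ≤ 3 := (natDegree_derivative_le f).trans (by omega)
  have degf'' : (derivative (derivative f)).natDegree ≤ 2 :=
    (natDegree_derivative_le _).trans (by omega)
  unfold stepanovResidual
  compute_degree
  omega

theorem natDegree_mul_le_six_of_add_eq_mul [IsDomain A] {e h : A[X]} {q r : ℕ} (hW0 : W ≠ 0)
    (hWh : 2 * S * g + e = W * h) (degW : r + W.natDegree = q) (degS : r + S.natDegree ≤ 4)
    (degWg : (W * g).natDegree ≤ 2 * (q - 1)) (dege : e.natDegree ≤ 3) (hq : 6 < q) :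
    (S * h).natDegree ≤ 6 := by
  rcases eq_or_ne h 0 with rfl | hh0
  · simp
  have degWWh : (W * (W * h)).natDegree ≤ 2 * q + 2 - r := by
    rw [← hWh, show W * (2 * S * g + e) = 2 * S * (W * g) + W * e by ring]
    have deg2S : (2 * S).natDegree ≤ S.natDegree := natDegree_C_mul_le (2 : A) S
    exact natDegree_add_le_of_degree_le (natDegree_mul_le.trans (by omega))
      (natDegree_mul_le.trans (by omega))
  rw [natDegree_mul hW0 (mul_ne_zero hW0 hh0), natDegree_mul hW0 hh0] at degWWh
  exact natDegree_mul_le.trans (by omega)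

end Derivative

variable {F : Type*} [Field F] [Fintype F]

theorem X_pow_card_sub_X_dvd_of_forall_eval_eq_zero {P : F[X]} (hP : ∀ z, P.eval z = 0) :
    X ^ Fintype.card F - X ∣ P := by
  rcases eq_or_ne P 0 with rfl | hP0
  · exact dvd_zero _
  have splits : (X ^ Fintype.card F - X : F[X]).Splits := by
    rw [splits_iff_card_roots, FiniteField.roots_X_pow_card_sub_X,
      FiniteField.X_pow_card_sub_X_natDegree_eq F Fintype.one_lt_card]
    rfl
  refine splits.dvd_of_roots_le_roots
    (FiniteField.X_pow_card_sub_X_ne_zero F Fintype.one_lt_card) ?_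
  rw [FiniteField.roots_X_pow_card_sub_X, Multiset.le_iff_subset Finset.univ.nodup]
  exact fun z _ => (mem_roots hP0).mpr (hP z)

theorem derivative_X_pow_card_sub_X : derivative (X ^ Fintype.card F - X : F[X]) = -1 := by
  simp [derivative_X_pow]

theorem two_mul_mul_derivative_pow_card_div_two (hF : ringChar F ≠ 2) (f : F[X]) :
    2 * f * derivative (f ^ (Fintype.card F / 2)) =
      -derivative f * f ^ (Fintype.card F / 2) := by
  have hodd := FiniteField.odd_card_of_char_ne_two hF
  have hcard := Fintype.one_lt_card (α := F)
  set m := Fintype.card F / 2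
  have two_m : (2 * m : F[X]) = -1 := by
    have : ((2 * m + 1 : ℕ) : F[X]) = 0 := by
      rw [show 2 * m + 1 = Fintype.card F by omega, ← map_natCast C, FiniteField.cast_card_eq_zero,
        map_zero]
    push_cast at this
    linear_combination this
  have pow_m : f * f ^ (m - 1) = f ^ m := mul_pow_sub_one (by omega) f
  rw [derivative_pow, map_natCast]
  linear_combination derivative f * f ^ m * two_m + 2 * m * derivative f * pow_m

theorem dvd_pow_card_div_two_add_one (hF : ringChar F ≠ 2) {f R W : F[X]}
    (hRW : R * W = X ^ Fintype.card F - X)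
    (hf : ∀ z, R.eval z ≠ 0 → ¬ IsSquare (f.eval z)) :
    W ∣ f ^ (Fintype.card F / 2) + 1 := by
  have hR0 : R ≠ 0 := by
    rintro rfl
    exact FiniteField.X_pow_card_sub_X_ne_zero F Fintype.one_lt_card (hRW ▸ zero_mul W)
  refine (mul_dvd_mul_iff_left hR0).mp
    (hRW ▸ X_pow_card_sub_X_dvd_of_forall_eval_eq_zero fun z => ?_)
  by_cases hz : R.eval z = 0
  · simp [hz]
  have nonsquare := hf z hz
  have eval_ne_zero : f.eval z ≠ 0 := fun h => nonsquare (h ▸ IsSquare.zero)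
  rw [FiniteField.isSquare_iff hF eval_ne_zero] at nonsquare
  simp [(FiniteField.pow_dichotomy hF eval_ne_zero).resolve_left nonsquare]

theorem dvd_sq_derivative_of_forall_not_isSquare (hF : ringChar F ≠ 2) {R S : F[X]}
    (hR : R ∣ X ^ Fintype.card F - X) (hdeg : R.natDegree + S.natDegree ≤ 4)
    (hcard : R.natDegree + 6 < Fintype.card F)
    (hf : ∀ z, R.eval z ≠ 0 → ¬ IsSquare ((R * S).eval z)) :
    S ∣ derivative (R * S) ^ 2 := by
  obtain ⟨W, hRW⟩ := hR
  obtain ⟨g, hg⟩ := dvd_pow_card_div_two_add_one hF hRW.symm hf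
  have hRW0 : R * W ≠ 0 := hRW ▸ FiniteField.X_pow_card_sub_X_ne_zero F Fintype.one_lt_card
  have hW0 : W ≠ 0 := right_ne_zero_of_mul hRW0
  have hW' : derivative (R * W) = -1 := hRW ▸ derivative_X_pow_card_sub_X
  have degW : R.natDegree + W.natDegree = Fintype.card F := by
    rw [← natDegree_mul (left_ne_zero_of_mul hRW0) hW0, ← hRW,
      FiniteField.X_pow_card_sub_X_natDegree_eq F Fintype.one_lt_card]
  have degf : (R * S).natDegree ≤ 4 := natDegree_mul_le.trans hdeg
  have degWg : (W * g).natDegree ≤ 2 * (Fintype.card F - 1) := by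
    have hodd := FiniteField.odd_card_of_char_ne_two hF
    rw [← hg, ← C_1, natDegree_add_C]
    exact natDegree_pow_le.trans ((Nat.mul_le_mul_left _ degf).trans (by omega))
  have hWh : 2 * S * g + derivative (R * S) = W * stepanovCofactor R S g := by
    refine two_mul_mul_add_derivative_eq_mul_stepanovCofactor hW' ?_
    have pow_derivative := two_mul_mul_derivative_pow_card_div_two hF (R * S)
    rwa [eq_sub_of_add_eq hg, derivative_sub, derivative_one, sub_zero] at pow_derivative
  have degSh : (S * stepanovCofactor R S g).natDegree ≤ 6 :=
    natDegree_mul_le_six_of_add_eq_mul hW0 hWh degW hdeg degWg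
      ((natDegree_derivative_le _).trans (by omega)) (by omega)
  have residual_eq_zero : stepanovResidual (R * S) (S * stepanovCofactor R S g) = 0 :=
    eq_zero_of_dvd_of_natDegree_lt (dvd_stepanovResidual hW' hWh)
      ((natDegree_stepanovResidual_le_six degf degSh).trans_lt (by omega))
  rw [stepanovResidual] at residual_eq_zero
  exact ⟨2 * R * derivative (derivative (R * S)) + 4 * stepanovCofactor R S g,
    by linear_combination -residual_eq_zero⟩

theorem X_sq_sub_C_sq_dvd_X_pow_card_sub_X (hF : ringChar F ≠ 2) {d : F} (hd : d ≠ 0) :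
    X ^ 2 - C (d ^ 2) ∣ (X ^ Fintype.card F - X : F[X]) := by
  have coprime : IsCoprime (X - C d) (X - C (-d)) := isCoprime_X_sub_C_of_isUnit_sub <| by
    rw [sub_neg_eq_add, ← two_mul]
    exact (mul_ne_zero (Ring.two_ne_zero hF) hd).isUnit
  have dvd_of_root (a : F) : X - C a ∣ X ^ Fintype.card F - X := by
    simp [dvd_iff_isRoot, FiniteField.pow_card]
  rw [show X ^ 2 - C (d ^ 2) = (X - C d) * (X - C (-d)) by rw [C_neg, C_pow]; ring]
  exact coprime.mul_dvd (dvd_of_root d) (dvd_of_root (-d))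

theorem exists_isSquare_sq_sub_mul_sq_sub (hF : ringChar F ≠ 2) (hcard : 8 < Fintype.card F)
    {b d : F} (hd : d ≠ 0) (hb : b ≠ 0) (hbd : b ≠ d ^ 2) :
    ∃ y, y ^ 2 ≠ d ^ 2 ∧ IsSquare ((y ^ 2 - d ^ 2) * (y ^ 2 - b)) := by
  by_contra! hcon
  have degree (a : F) : (X ^ 2 - C a).natDegree = 2 := natDegree_X_pow_sub_C
  have dvd_sq : X ^ 2 - C b ∣ derivative ((X ^ 2 - C (d ^ 2)) * (X ^ 2 - C b)) ^ 2 := by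
    refine dvd_sq_derivative_of_forall_not_isSquare hF
      (X_sq_sub_C_sq_dvd_X_pow_card_sub_X hF hd) (by simp only [degree]; rfl)
      (by rwa [degree]) fun z hz => ?_
    simp only [eval_sub, eval_mul, eval_pow, eval_X, eval_C] at hz ⊢
    exact hcon z (sub_ne_zero.mp hz)
  have coprime : IsCoprime (X ^ 2 - C (d ^ 2)) (X ^ 2 - C b) := by
    have inv_mul : C (d ^ 2 - b)⁻¹ * C (d ^ 2 - b) = 1 := by
      rw [← C_mul, inv_mul_cancel₀ (sub_ne_zero.mpr hbd.symm), C_1]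
    refine ⟨-C (d ^ 2 - b)⁻¹, C (d ^ 2 - b)⁻¹, ?_⟩
    rw [C_sub] at inv_mul
    linear_combination inv_mul
  have separable {a : F} (ha : a ≠ 0) : (X ^ 2 - C a).Separable :=
    separable_X_pow_sub_C a (mod_cast Ring.two_ne_zero hF) ha
  have separable_mul : ((X ^ 2 - C (d ^ 2)) * (X ^ 2 - C b)).Separable :=
    (separable (pow_ne_zero 2 hd)).mul (separable hb) coprime
  have isUnit : IsUnit (X ^ 2 - C b) :=
    (separable_mul.pow_right (n := 2)).isUnit_of_dvd' (dvd_mul_left _ _) dvd_sq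
  exact two_ne_zero ((degree b).symm.trans (natDegree_eq_zero_of_isUnit isUnit))

theorem exists_sq_sub_sq_mul_sq_sub_sq_eq (h30 : (30 : F) ≠ 0) (hcard : 8 < Fintype.card F)
    {d : F} (hd : d ≠ 0) (c : F) :
    ∃ x y, (x ^ 2 - d ^ 2) * (y ^ 2 - d ^ 2) = c ∧ x ≠ 0 ∧ y ^ 2 ≠ d ^ 2 := by
  have h235 : (2 : F) * 3 * 5 ≠ 0 := by norm_num [h30]
  obtain ⟨⟨h2, h3⟩, h5⟩ := by simpa only [mul_ne_zero_iff] using h235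
  have hF : ringChar F ≠ 2 := fun h => h2 (by simpa [h] using ringChar.Nat.cast_ringChar (R := F))
  rcases eq_or_ne c 0 with rfl | hc0
  · exact ⟨d, 0, by ring, hd, by simpa using (pow_ne_zero 2 hd).symm⟩
  rcases eq_or_ne c (d ^ 4) with rfl | hc
  · have h4 : (4 : F) ≠ 0 := by simpa [← pow_two, show (4 : F) = 2 ^ 2 by norm_num] using h2
    -- From the triangle `(3, 4, 5)`: `(5/3)² - 1 = (4/3)²` and `(5/4)² - 1 = (3/4)²`.
    refine ⟨5 / 3 * d, 5 / 4 * d, ?_, ?_, ?_⟩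
    · field_simp
      norm_num
    · exact mul_ne_zero (div_ne_zero h5 h3) hd
    · intro h
      have : (3 * d) ^ 2 = 0 := by field_simp at h; linear_combination d ^ 2 * h
      exact pow_ne_zero 2 (mul_ne_zero h3 hd) this
  obtain ⟨b, hb⟩ : ∃ b, d ^ 2 * (d ^ 2 - b) = c := ⟨d ^ 2 - c / d ^ 2, by field_simp; ring⟩
  have hb0 : b ≠ 0 := by rintro rfl; exact hc (by rw [← hb]; ring)
  have hbd : b ≠ d ^ 2 := by rintro rfl; exact hc0 (by rw [← hb]; ring)
  obtain ⟨y, hy, s, hs⟩ := exists_isSquare_sq_sub_mul_sq_sub hF hcard hd hb0 hbd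
  have hyd : y ^ 2 - d ^ 2 ≠ 0 := sub_ne_zero.mpr hy
  rcases eq_or_ne s 0 with rfl | hs0
  · have hyb : y ^ 2 = b :=
      sub_eq_zero.mp ((mul_eq_zero.mp (hs.trans (mul_zero 0))).resolve_left hyd)
    refine ⟨y, 0, ?_, ?_, ?_⟩
    · rw [← hb, ← hyb]; ring
    · rintro rfl; exact hb0 (by rw [← hyb]; ring)
    · simpa using (pow_ne_zero 2 hd).symm
  · refine ⟨d * s / (y ^ 2 - d ^ 2), y, ?_, div_ne_zero (mul_ne_zero hd hs0) hyd, hy⟩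
    rw [← hb]
    field_simp
    linear_combination -hs

end Stepanov

section MarkoffK3

variable {A B : Type*} [CommRing A] [CommRing B]

/-- The left-hand side of the Markoff-type K3 equation; the surface `U_k` is its level set `k` for
`a = 36`, `m = 468 = -m₀` and `C = 4330 = -C₀`. -/
def markoffK3 (a m C x y z : A) : A :=
  (x ^ 2 - a) * (y ^ 2 - a) * (z ^ 2 - a) + m * (x * y * z - C) ^ 2

/-- The partial derivative of `markoffK3` in `x`, written out so that it makes sense over any ring;
the other two partial derivatives follow by symmetry. -/
def markoffK3Dx (a m C x y z : A) : A :=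
  2 * x * (y ^ 2 - a) * (z ^ 2 - a) + 2 * m * (y * z) * (x * y * z - C)

theorem map_markoffK3 (φ : A →+* B) (a m C x y z : A) :
    φ (markoffK3 a m C x y z) = markoffK3 (φ a) (φ m) (φ C) (φ x) (φ y) (φ z) := by
  simp only [markoffK3, map_add, map_sub, map_mul, map_pow]

theorem map_markoffK3Dx (φ : A →+* B) (a m C x y z : A) :
    φ (markoffK3Dx a m C x y z) = markoffK3Dx (φ a) (φ m) (φ C) (φ x) (φ y) (φ z) := by
  simp only [markoffK3Dx, map_add, map_sub, map_mul, map_pow, map_ofNat]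

theorem markoffK3_zero (a m C x y : A) :
    markoffK3 a m C x y 0 = m * C ^ 2 - a * ((x ^ 2 - a) * (y ^ 2 - a)) := by
  unfold markoffK3; ring

theorem markoffK3Dx_zero (a m C x y : A) :
    markoffK3Dx a m C x y 0 = -(2 * a * x * (y ^ 2 - a)) := by
  unfold markoffK3Dx; ring

theorem exists_sq_sub_mul_sq_sub_eq_real {a : ℝ} (ha : 0 < a) (c : ℝ) :
    ∃ x y : ℝ, (x ^ 2 - a) * (y ^ 2 - a) = c := by
  have hN : 0 < |c| / a + 1 := by positivity
  have hx : 0 ≤ a + c / (|c| / a + 1) := by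
    rw [show a + c / (|c| / a + 1) = (|c| + c + a) / (|c| / a + 1) by field_simp; ring]
    exact div_nonneg (by linarith [neg_abs_le c]) hN.le
  refine ⟨√(a + c / (|c| / a + 1)), √(a + (|c| / a + 1)), ?_⟩
  rw [Real.sq_sqrt hx, Real.sq_sqrt (by positivity)]
  field_simp
  ring

theorem exists_real_markoffK3_eq {a : ℝ} (ha : 0 < a) (m C k : ℝ) :
    ∃ x y z, markoffK3 a m C x y z = k := by
  obtain ⟨x, y, hxy⟩ := exists_sq_sub_mul_sq_sub_eq_real ha ((m * C ^ 2 - k) / a)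
  refine ⟨x, y, 0, ?_⟩
  rw [markoffK3_zero, hxy, mul_div_cancel₀ _ ha.ne', sub_sub_cancel]

theorem exists_finiteField_markoffK3_eq {F : Type*} [Field F] [Fintype F] (h30 : (30 : F) ≠ 0)
    (hcard : 8 < Fintype.card F) {d : F} (hd : d ≠ 0) (m C k : F) :
    ∃ x y z, markoffK3 (d ^ 2) m C x y z = k ∧ markoffK3Dx (d ^ 2) m C x y z ≠ 0 := by
  have hd2 : d ^ 2 ≠ 0 := pow_ne_zero 2 hd
  have h2 : (2 : F) ≠ 0 := fun h => h30 (by linear_combination 15 * h)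
  obtain ⟨x, y, hxy, hx, hy⟩ :=
    exists_sq_sub_sq_mul_sq_sub_sq_eq h30 hcard hd ((m * C ^ 2 - k) / d ^ 2)
  refine ⟨x, y, 0, ?_, ?_⟩
  · rw [markoffK3_zero, hxy, mul_div_cancel₀ _ hd2, sub_sub_cancel]
  · rw [markoffK3Dx_zero, neg_ne_zero]
    exact mul_ne_zero (mul_ne_zero (mul_ne_zero h2 hd2) hx) (sub_ne_zero.mpr hy)

section Padic

variable {p : ℕ} [Fact p.Prime]

theorem exists_padicInt_quadratic_eq_zero {α β γ x : ℤ_[p]}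
    (h : ‖α * x ^ 2 + β * x + γ‖ < ‖2 * α * x + β‖ ^ 2) :
    ∃ t : ℤ_[p], α * t ^ 2 + β * t + γ = 0 := by
  have eval_eq (t : ℤ_[p]) :
      (C α * X ^ 2 + C β * X + C γ).aeval t = α * t ^ 2 + β * t + γ := by
    simp [coe_aeval_eq_eval]
  have eval_derivative : (derivative (C α * X ^ 2 + C β * X + C γ)).aeval x = 2 * α * x + β := by
    simp only [coe_aeval_eq_eval, derivative_add, derivative_C_mul, derivative_X_sq, derivative_X,
      derivative_C, eval_add, eval_mul, eval_C, eval_X, eval_one, eval_zero]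
    ring
  obtain ⟨t, ht, -⟩ := hensels_lemma (F := C α * X ^ 2 + C β * X + C γ) (a := x)
    (by rwa [eval_eq, eval_derivative])
  exact ⟨t, (eval_eq t).symm.trans ht⟩

theorem exists_padicInt_markoffK3_eq_of_norm_lt {a m C k x y z : ℤ_[p]}
    (h : ‖markoffK3 a m C x y z - k‖ < ‖markoffK3Dx a m C x y z‖ ^ 2) :
    ∃ t, markoffK3 a m C t y z = k := by
  set α := (y ^ 2 - a) * (z ^ 2 - a) + m * (y * z) ^ 2 with hα
  set β := -(2 * m * C * (y * z)) with hβ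
  set γ := -a * (y ^ 2 - a) * (z ^ 2 - a) + m * C ^ 2 - k with hγ
  have expand (t : ℤ_[p]) : markoffK3 a m C t y z - k = α * t ^ 2 + β * t + γ := by
    simp only [markoffK3, hα, hβ, hγ]; ring
  have expandDx : markoffK3Dx a m C x y z = 2 * α * x + β := by
    simp only [markoffK3Dx, hα, hβ]; ring
  rw [expand, expandDx] at h
  obtain ⟨t, ht⟩ := exists_padicInt_quadratic_eq_zero h
  exact ⟨t, sub_eq_zero.mp ((expand t).trans ht)⟩

theorem exists_padicInt_markoffK3_eq_of_dvd {a m C k x y z : ℤ} (n : ℕ)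
    (h : (p : ℤ) ^ (2 * n + 1) ∣ markoffK3 a m C x y z - k)
    (hDx : ¬ (p : ℤ) ^ (n + 1) ∣ markoffK3Dx a m C x y z) :
    ∃ x y z : ℤ_[p], markoffK3 (a : ℤ_[p]) m C x y z = k := by
  obtain ⟨t, ht⟩ := exists_padicInt_markoffK3_eq_of_norm_lt (p := p) (a := a) (m := m) (C := C)
    (k := k) (x := x) (y := y) (z := z) (by
      have cast := map_markoffK3 (Int.castRingHom ℤ_[p]) a m C x y z
      have castDx := map_markoffK3Dx (Int.castRingHom ℤ_[p]) a m C x y z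
      simp only [eq_intCast] at cast castDx
      rw [← cast, ← castDx, ← Int.cast_sub]
      rw [← PadicInt.norm_int_le_pow_iff_dvd,
        PadicInt.norm_le_pow_iff_norm_lt_pow_add_one] at h hDx
      push Not at hDx
      refine h.trans_le ((le_of_eq ?_).trans (pow_le_pow_left₀ (by positivity) hDx 2))
      rw [← zpow_natCast, ← zpow_mul]
      congr 1
      push_cast
      ring)
  exact ⟨t, y, z, ht⟩

theorem exists_padicInt_markoffK3_eq_of_zmod {a m C k : ℤ} {x y z : ZMod p}
    (h : markoffK3 (a : ZMod p) m C x y z = k)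
    (hDx : markoffK3Dx (a : ZMod p) m C x y z ≠ 0) :
    ∃ x y z : ℤ_[p], markoffK3 (a : ℤ_[p]) m C x y z = k := by
  obtain ⟨x, rfl⟩ := ZMod.intCast_surjective x
  obtain ⟨y, rfl⟩ := ZMod.intCast_surjective y
  obtain ⟨z, rfl⟩ := ZMod.intCast_surjective z
  have cast := map_markoffK3 (Int.castRingHom (ZMod p)) a m C x y z
  have castDx := map_markoffK3Dx (Int.castRingHom (ZMod p)) a m C x y z
  simp only [eq_intCast] at cast castDx
  refine exists_padicInt_markoffK3_eq_of_dvd (x := x) (y := y) (z := z) 0 ?_ ?_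
  · rw [mul_zero, zero_add, pow_one, ← ZMod.intCast_zmod_eq_zero_iff_dvd, Int.cast_sub, cast, h,
      sub_self]
  · rwa [zero_add, pow_one, ← ZMod.intCast_zmod_eq_zero_iff_dvd, castDx]

theorem natCast_zmod_ne_zero_of_dvd_factorial {n r : ℕ} (hn : n ∣ r.factorial) (hr : r < p) :
    (n : ZMod p) ≠ 0 := by
  rw [Ne, ZMod.natCast_eq_zero_iff]
  exact fun h => hr.not_ge (((Fact.out : p.Prime).dvd_factorial).mp (h.trans hn))

theorem exists_padicInt_markoffK3_eq_of_eleven_le (hp : 11 ≤ p) {d : ℤ} (hd : (d : ZMod p) ≠ 0)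
    (m C k : ℤ) : ∃ x y z : ℤ_[p], markoffK3 ((d ^ 2 : ℤ) : ℤ_[p]) m C x y z = k := by
  have h30 : (30 : ZMod p) ≠ 0 :=
    mod_cast natCast_zmod_ne_zero_of_dvd_factorial (p := p) (n := 30) (r := 5) (by decide)
      (by omega)
  have hcard : 8 < Fintype.card (ZMod p) := by rw [ZMod.card]; omega
  obtain ⟨x, y, z, h, hDx⟩ := exists_finiteField_markoffK3_eq h30 hcard hd m C k
  exact exists_padicInt_markoffK3_eq_of_zmod (by rwa [Int.cast_pow]) (by rwa [Int.cast_pow])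

end Padic

theorem exists_zmod_five_markoffK3_eq (k : ZMod 5) : ∃ x y z : ZMod 5,
    markoffK3 36 468 4330 x y z = k ∧ markoffK3Dx 36 468 4330 x y z ≠ 0 := by
  unfold markoffK3 markoffK3Dx
  decide +revert

theorem exists_zmod_seven_markoffK3_eq (k : ZMod 7) : ∃ x y z : ZMod 7,
    markoffK3 36 468 4330 x y z = k ∧ markoffK3Dx 36 468 4330 x y z ≠ 0 := by
  unfold markoffK3 markoffK3Dx
  decide +revert

theorem exists_padicInt_markoffK3_eq_of_modEq {k : ℤ} (hk : k ≡ 1 [ZMOD 24]) (p : ℕ)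
    [Fact p.Prime] :
    ∃ x y z : ℤ_[p], markoffK3 ((36 : ℤ) : ℤ_[p]) (468 : ℤ) (4330 : ℤ) x y z = k := by
  have hk24 : (24 : ℤ) ∣ k - 1 := hk.symm.dvd
  rcases le_or_gt 11 p with hp | hp
  · have h6 : ((6 : ℤ) : ZMod p) ≠ 0 :=
      mod_cast natCast_zmod_ne_zero_of_dvd_factorial (p := p) (n := 6) (r := 3) (by decide)
        (by omega)
    exact exists_padicInt_markoffK3_eq_of_eleven_le hp h6 468 4330 k
  have small : p = 2 ∨ p = 3 ∨ p = 5 ∨ p = 7 := by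
    have prime : p.Prime := Fact.out
    interval_cases p <;> revert prime <;> decide
  rcases small with rfl | rfl | rfl | rfl
  · exact exists_padicInt_markoffK3_eq_of_dvd (x := 1) (y := 1) (z := 1) 1
      (by norm_num [markoffK3]; omega) (by norm_num [markoffK3Dx])
  · exact exists_padicInt_markoffK3_eq_of_dvd (x := 1) (y := 1) (z := 1) 0
      (by norm_num [markoffK3]; omega) (by norm_num [markoffK3Dx])
  · obtain ⟨x, y, z, h, hDx⟩ := exists_zmod_five_markoffK3_eq k
    exact exists_padicInt_markoffK3_eq_of_zmod h hDx
  · obtain ⟨x, y, z, h, hDx⟩ := exists_zmod_seven_markoffK3_eq k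
    exact exists_padicInt_markoffK3_eq_of_zmod h hDx

end MarkoffK3

theorem stmt3_general (k : ℤ) (hmod : k ≡ 1 [ZMOD 24]) :
    (∃ x y z : ℝ,
      (x ^ 2 - 36) * (y ^ 2 - 36) * (z ^ 2 - 36) + 468 * (x * y * z - 4330) ^ 2 = (k : ℝ)) ∧
    (∀ (p : ℕ) [Fact p.Prime], ∃ x y z : ℤ_[p],
      (x ^ 2 - 36) * (y ^ 2 - 36) * (z ^ 2 - 36) + 468 * (x * y * z - 4330) ^ 2 = (k : ℤ_[p])) :=
  ⟨exists_real_markoffK3_eq (by norm_num) 468 4330 k, fun p _ => by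
    simpa only [markoffK3, Int.cast_ofNat] using exists_padicInt_markoffK3_eq_of_modEq hmod p⟩

/-- Proposition 5.1. For a positive integer `k ≡ 1 (mod P)`, the affine
Markoff-type K3 equation `(x²−36)(y²−36)(z²−36) + 468(xyz−4330)² = k` has a real solution and
a solution in the `p`-adic integers for every prime `p`. -/
theorem stmt3 (k : ℤ) (hk : 0 < k)
    (hmod : k ≡ 1 [ZMOD (2 ^ 3 * 3 * 5 * 7 * 11 * 13 * 31 * 433 * 2017 * 3253 * 8501 *
      32687 * 46649 * 4057231)]) :
    (∃ x y z : ℝ,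
      (x ^ 2 - 36) * (y ^ 2 - 36) * (z ^ 2 - 36) + 468 * (x * y * z - 4330) ^ 2 = (k : ℝ)) ∧
    (∀ (p : ℕ) [Fact p.Prime], ∃ x y z : ℤ_[p],
      (x ^ 2 - 36) * (y ^ 2 - 36) * (z ^ 2 - 36) + 468 * (x * y * z - 4330) ^ 2 = (k : ℤ_[p])) :=
  stmt3_general k (hmod.of_dvd (by norm_num))
end

section
/- Let p ≥ 11 be a prime number and let k be an integer such that p divides neither k − 8774485200 nor k − 8774438544. Then there exist x, y in the field 𝔽_p = ℤ/pℤ with −36·(x²−36)·(y²−36) = k − 8774485200 in 𝔽_p, and moreover one can choose such (x, y) to be a smooth point of the affine curve, i.e. with x·(y²−36) ≠ 0 or y·(x²−36) ≠ 0 in 𝔽_p. -/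
/-!
Put `s = x²` and `e = a - c / b`. The curve `(x² - a) (y² - b) = c` has a point over `s ≠ a` as
soon as both `s` and `b (s - a) (s - e)` are squares. If this never happens, then `e` is not a
square, and summing `(1 + χ s) (1 + χ (b (s - a) (s - e)))` over `s ∈ 𝔽_q`, where `χ` is the
quadratic character, gives `∑ s, χ (b s (s - a) (s - e)) = 1 + χ a + χ b - q`. The cubic has three
roots, so this sum is at least `3 - q`; hence `a` and `b` are squares and
`χ (s (s - a) (s - e)) = -1` away from the roots. The reflection `s ↦ a + e - s` exchanges `a` and
`e`, so multiplying the values at `s` and at its image shows `χ (s (a + e - s)) = 1` for all but at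
most four `s`. But `∑ s, χ (s (a + e - s))` is `±1` if `a + e ≠ 0`, and is negative if `a + e = 0`,
since then `-1` is not a square; so `q ≤ 9`.
-/

section QuadraticChar

variable {F : Type*} [Field F] [Fintype F] [DecidableEq F]

lemma neg_one_le_quadraticChar (a : F) : -1 ≤ quadraticChar F a := by
  rcases quadraticChar_isQuadratic F a with h | h | h <;> simp [h]

lemma quadraticChar_le_one (a : F) : quadraticChar F a ≤ 1 := by
  rcases quadraticChar_isQuadratic F a with h | h | h <;> simp [h]

lemma sum_quadraticChar_sub_mul_sub (hF : ringChar F ≠ 2) {a b : F} (hab : a ≠ b) :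
    ∑ x : F, quadraticChar F ((x - a) * (x - b)) = -1 := by
  have hba : b - a ≠ 0 := sub_ne_zero.mpr hab.symm
  have jacobi : ∑ t : F, quadraticChar F t * quadraticChar F (1 - t) = -quadraticChar F (-1) := by
    have h := jacobiSum_nontrivial_inv (quadraticChar_ne_one hF)
    rwa [(quadraticChar_isQuadratic F).inv, jacobiSum] at h
  have affine_bijective : Function.Bijective fun t : F ↦ a + (b - a) * t :=
    (Equiv.addLeft a).bijective.comp (mulLeft_bijective₀ _ hba)
  have affine_value (t : F) :
      quadraticChar F ((a + (b - a) * t - a) * (a + (b - a) * t - b)) =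
        quadraticChar F (-1) * (quadraticChar F t * quadraticChar F (1 - t)) := by
    rw [show (a + (b - a) * t - a) * (a + (b - a) * t - b) =
        (b - a) ^ 2 * (-1 * (t * (1 - t))) by ring,
      map_mul, quadraticChar_sq_one' hba, one_mul, map_mul, map_mul]
  calc ∑ x : F, quadraticChar F ((x - a) * (x - b))
      = ∑ t : F, quadraticChar F ((a + (b - a) * t - a) * (a + (b - a) * t - b)) :=
        (affine_bijective.sum_comp fun x ↦ quadraticChar F ((x - a) * (x - b))).symm
    _ = quadraticChar F (-1) * -quadraticChar F (-1) := by
        simp_rw [affine_value, ← Finset.mul_sum, jacobi]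
    _ = -1 := by
        rw [mul_neg, ← sq, quadraticChar_sq_one (neg_ne_zero.mpr one_ne_zero)]

lemma sum_quadraticChar_eq_sum_compl {f : F → F} {Z : Finset F} (hZ : ∀ s ∈ Z, f s = 0) :
    ∑ s, quadraticChar F (f s) = ∑ s ∈ Zᶜ, quadraticChar F (f s) := by
  rw [← Finset.sum_add_sum_compl Z, Finset.sum_eq_zero fun s hs ↦ by simp [hZ s hs], zero_add]

lemma card_sub_card_le_sum_quadraticChar {f : F → F} {Z : Finset F} (hZ : ∀ s ∈ Z, f s = 0) :
    (Z.card : ℤ) - Fintype.card F ≤ ∑ s, quadraticChar F (f s) := by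
  have h := Finset.card_nsmul_le_sum Zᶜ (fun s ↦ quadraticChar F (f s)) (-1)
    fun s _ ↦ neg_one_le_quadraticChar (f s)
  have hcard := Z.card_add_card_compl
  rw [sum_quadraticChar_eq_sum_compl hZ]
  rw [nsmul_eq_mul] at h
  omega

lemma quadraticChar_eq_neg_one_of_sum_eq {f : F → F} {Z : Finset F} (hZ : ∀ s ∈ Z, f s = 0)
    (hsum : ∑ s, quadraticChar F (f s) = (Z.card : ℤ) - Fintype.card F) {s : F} (hs : s ∉ Z) :
    quadraticChar F (f s) = -1 := by
  have hcard := Z.card_add_card_compl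
  have sum_eq : ∑ _s ∈ Zᶜ, (-1 : ℤ) = ∑ s ∈ Zᶜ, quadraticChar F (f s) := by
    rw [← sum_quadraticChar_eq_sum_compl hZ, hsum, Finset.sum_const, nsmul_eq_mul]
    omega
  exact ((Finset.sum_eq_sum_iff_of_le fun s _ ↦ neg_one_le_quadraticChar (f s)).mp sum_eq s
    (Finset.mem_compl.mpr hs)).symm

lemma card_sub_two_mul_card_le_sum_quadraticChar {f : F → F} {Z : Finset F}
    (hZ : ∀ s ∉ Z, quadraticChar F (f s) = 1) :
    (Fintype.card F : ℤ) - 2 * Z.card ≤ ∑ s, quadraticChar F (f s) := by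
  have sum_Z := Finset.card_nsmul_le_sum Z (fun s ↦ quadraticChar F (f s)) (-1)
    fun s _ ↦ neg_one_le_quadraticChar (f s)
  have sum_compl : ∑ s ∈ Zᶜ, quadraticChar F (f s) = Zᶜ.card := by
    rw [Finset.sum_congr rfl fun s hs ↦ hZ s (Finset.mem_compl.mp hs)]
    simp
  have hcard := Z.card_add_card_compl
  rw [← Finset.sum_add_sum_compl Z, sum_compl]
  rw [nsmul_eq_mul] at sum_Z
  omega

lemma sum_quadraticChar_mul_sub_le_one (hF : ringChar F ≠ 2) {r : F}
    (hr : r = 0 → quadraticChar F (-1) = -1) :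
    ∑ s : F, quadraticChar F (s * (r - s)) ≤ 1 := by
  have factor (s : F) : quadraticChar F (s * (r - s)) =
      quadraticChar F (-1) * quadraticChar F ((s - 0) * (s - r)) := by
    rw [← map_mul]; congr 1; ring
  simp_rw [factor, ← Finset.mul_sum]
  rcases eq_or_ne r 0 with rfl | hr0
  · have sum_nonneg : 0 ≤ ∑ s : F, quadraticChar F ((s - 0) * (s - 0)) :=
      Finset.sum_nonneg fun s _ ↦ by rw [map_mul]; exact mul_self_nonneg _
    rw [hr rfl]
    linarith
  · rw [sum_quadraticChar_sub_mul_sub hF hr0.symm]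
    linarith [neg_one_le_quadraticChar (-1 : F)]

lemma quadraticChar_mul_sub_eq_one_of_cubic {a e : F}
    (hcubic : ∀ s, s ≠ 0 → s ≠ a → s ≠ e → quadraticChar F (s * (s - a) * (s - e)) = -1)
    {s : F} (hs0 : s ≠ 0) (hsa : s ≠ a) (hse : s ≠ e) (hsae : s ≠ a + e) :
    quadraticChar F (s * (a + e - s)) = 1 := by
  have value := hcubic s hs0 hsa hse
  have value_reflected := hcubic (a + e - s) (sub_ne_zero.mpr hsae.symm)
    (fun h ↦ hse (by linear_combination -h)) (fun h ↦ hsa (by linear_combination -h))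
  have product : (s * (s - a) * (s - e)) *
      ((a + e - s) * (a + e - s - a) * (a + e - s - e)) =
        ((s - a) * (s - e)) ^ 2 * (s * (a + e - s)) := by ring
  have h := congrArg (quadraticChar F) product
  rw [map_mul, value, value_reflected, map_mul, quadraticChar_sq_one'
    (mul_ne_zero (sub_ne_zero.mpr hsa) (sub_ne_zero.mpr hse))] at h
  linarith

lemma exists_quadraticChar_cubic_ne_neg_one (hF : ringChar F ≠ 2) (hcard : 11 ≤ Fintype.card F)
    {a e : F} (hae : quadraticChar F a ≠ quadraticChar F e) :
    ∃ s, s ≠ 0 ∧ s ≠ a ∧ s ≠ e ∧ quadraticChar F (s * (s - a) * (s - e)) ≠ -1 := by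
  by_contra! hcubic
  have quadratic_eq_one : ∀ s ∉ ({0, a, e, a + e} : Finset F),
      quadraticChar F (s * (a + e - s)) = 1 := by
    intro s hs
    simp only [Finset.mem_insert, Finset.mem_singleton, not_or] at hs
    exact quadraticChar_mul_sub_eq_one_of_cubic hcubic hs.1 hs.2.1 hs.2.2.1 hs.2.2.2
  have neg_one_nonsquare (h : a + e = 0) : quadraticChar F (-1) = -1 := by
    refine (quadraticChar_eq_neg_one_iff_not_one (neg_ne_zero.mpr one_ne_zero)).mpr fun h1 ↦ hae ?_
    rw [show e = -1 * a by linear_combination h, map_mul, h1, one_mul]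
  have lower := card_sub_two_mul_card_le_sum_quadraticChar quadratic_eq_one
  have upper := sum_quadraticChar_mul_sub_le_one hF neg_one_nonsquare
  have four : ({0, a, e, a + e} : Finset F).card ≤ 4 := Finset.card_le_four
  omega

lemma sum_quadraticChar_cubic_of_not_isSquare (hF : ringChar F ≠ 2) {a b e : F} (hae : a ≠ e)
    (h : ∀ s, s ≠ a → IsSquare s → ¬ IsSquare (b * ((s - a) * (s - e)))) :
    ∑ s, quadraticChar F (b * (s * (s - a) * (s - e))) =
      1 + quadraticChar F a + quadraticChar F b - Fintype.card F := by
  have product_eq (s : F) :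
      (1 + quadraticChar F s) * (1 + quadraticChar F (b * ((s - a) * (s - e)))) =
        if s = a then 1 + quadraticChar F a else 0 := by
    split_ifs with hsa
    · simp [hsa]
    · by_cases hs : IsSquare s
      · simp [quadraticChar_neg_one_iff_not_isSquare.mpr (h s hsa hs)]
      · simp [quadraticChar_neg_one_iff_not_isSquare.mpr hs]
  have cubic_eq (s : F) : quadraticChar F (b * (s * (s - a) * (s - e))) =
      (if s = a then 1 + quadraticChar F a else 0) - 1 - quadraticChar F s -
        quadraticChar F b * quadraticChar F ((s - a) * (s - e)) := by
    rw [← product_eq, show b * (s * (s - a) * (s - e)) = s * (b * ((s - a) * (s - e))) by ring,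
      map_mul _ s, map_mul _ b]
    ring
  simp_rw [cubic_eq, Finset.sum_sub_distrib, ← Finset.mul_sum, quadraticChar_sum_zero hF,
    sum_quadraticChar_sub_mul_sub hF hae]
  simp only [Finset.sum_ite_eq', Finset.mem_univ, if_true, Finset.sum_const, Finset.card_univ,
    nsmul_eq_mul]
  ring

end QuadraticChar

section Curve

variable {F : Type*} [Field F] [Fintype F]

lemma exists_isSquare_and_isSquare_mul (hF : ringChar F ≠ 2)
    (hcard : 11 ≤ Fintype.card F) {a b e : F} (ha : a ≠ 0) (he : e ≠ 0) (hae : a ≠ e) :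
    ∃ s, s ≠ a ∧ IsSquare s ∧ IsSquare (b * ((s - a) * (s - e))) := by
  classical
  by_contra! h
  have roots : ∀ s ∈ ({0, a, e} : Finset F), b * (s * (s - a) * (s - e)) = 0 := by
    intro s hs
    simp only [Finset.mem_insert, Finset.mem_singleton] at hs
    rcases hs with rfl | rfl | rfl <;> simp
  have three_roots : ({0, a, e} : Finset F).card = 3 :=
    Finset.card_eq_three.mpr ⟨0, a, e, ha.symm, he.symm, hae, rfl⟩
  have sum_eq := sum_quadraticChar_cubic_of_not_isSquare hF hae h
  have sum_ge := card_sub_card_le_sum_quadraticChar roots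
  have char_a : quadraticChar F a = 1 := by
    linarith [quadraticChar_le_one a, quadraticChar_le_one b]
  have char_b : quadraticChar F b = 1 := by
    linarith [quadraticChar_le_one a, quadraticChar_le_one b]
  have char_e : quadraticChar F e = -1 :=
    quadraticChar_neg_one_iff_not_isSquare.mpr fun hsq ↦ h e hae.symm hsq (by simp)
  obtain ⟨s, hs0, hsa, hse, hs⟩ := exists_quadraticChar_cubic_ne_neg_one (a := a) (e := e) hF hcard
    (by rw [char_a, char_e]; norm_num)
  refine hs ?_
  have extremal := quadraticChar_eq_neg_one_of_sum_eq roots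
    (by rw [sum_eq, char_a, char_b, three_roots]; norm_num) (s := s) (by simp [hs0, hsa, hse])
  rwa [map_mul, char_b, one_mul] at extremal

lemma smooth_of_sq_sub_mul_sq_sub_eq {R : Type*} [CommRing R] [NoZeroDivisors R] {a b c x y : R}
    (hc : c ≠ 0) (hab : c ≠ a * b) (hxy : (x ^ 2 - a) * (y ^ 2 - b) = c) :
    x * (y ^ 2 - b) ≠ 0 ∨ y * (x ^ 2 - a) ≠ 0 := by
  obtain ⟨hx, hy⟩ := mul_ne_zero_iff.mp (hxy.trans_ne hc)
  by_contra! h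
  obtain rfl : x = 0 := (mul_eq_zero.mp h.1).resolve_right hy
  obtain rfl : y = 0 := (mul_eq_zero.mp h.2).resolve_right hx
  exact hab (by linear_combination -hxy)

lemma exists_sq_sub_mul_sq_sub_eq (hF : ringChar F ≠ 2)
    (hcard : 11 ≤ Fintype.card F) {a b c : F} (ha : a ≠ 0) (hb : b ≠ 0) (hc : c ≠ 0)
    (hab : c ≠ a * b) : ∃ x y : F, (x ^ 2 - a) * (y ^ 2 - b) = c := by
  obtain ⟨e, rfl⟩ : ∃ e, c = b * (a - e) := ⟨a - c / b, by field_simp; ring⟩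
  have he : e ≠ 0 := fun h ↦ hab (by rw [h]; ring)
  have hae : a ≠ e := fun h ↦ hc (by rw [h]; ring)
  obtain ⟨s, hsa, ⟨x, hx⟩, ⟨w, hw⟩⟩ :=
    exists_isSquare_and_isSquare_mul (b := b) hF hcard ha he hae
  have hs : s - a ≠ 0 := sub_ne_zero.mpr hsa
  refine ⟨x, w / (s - a), ?_⟩
  rw [sq x, ← hx, div_pow, sq w, ← hw]
  field_simp
  ring

theorem stmt4_general (hF : ringChar F ≠ 2)
    (hcard : 11 ≤ Fintype.card F) {d a b c : F} (hd : d ≠ 0) (ha : a ≠ 0) (hb : b ≠ 0)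
    (hc : c ≠ 0) (hab : c ≠ d * a * b) :
    ∃ x y : F, d * (x ^ 2 - a) * (y ^ 2 - b) = c ∧
      (x * (y ^ 2 - b) ≠ 0 ∨ y * (x ^ 2 - a) ≠ 0) := by
  have hcd : c / d ≠ 0 := div_ne_zero hc hd
  have hcdab : c / d ≠ a * b := fun h ↦ hab (by rw [(div_eq_iff hd).mp h]; ring)
  obtain ⟨x, y, hxy⟩ := exists_sq_sub_mul_sq_sub_eq hF hcard ha hb hcd hcdab
  exact ⟨x, y, by rw [mul_assoc, hxy, mul_div_cancel₀ c hd],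
    smooth_of_sq_sub_mul_sq_sub_eq hcd hcdab hxy⟩

end Curve

/-- Hasse–Weil step in Proposition 5.1. For a prime `p ≥ 11` dividing
neither `k − 468·4330²` nor `k − (468·4330² − 36³)`, the affine curve
`−36(x²−36)(y²−36) = k − 468·4330²` over `𝔽_p` has a smooth `𝔽_p`-point. -/
theorem stmt4 (p : ℕ) (hp : p.Prime) (hp11 : 11 ≤ p) (k : ℤ)
    (h1 : ¬ (p : ℤ) ∣ (k - 8774485200)) (h2 : ¬ (p : ℤ) ∣ (k - 8774438544)) :
    ∃ x y : ZMod p,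
      -36 * (x ^ 2 - 36) * (y ^ 2 - 36) = (k : ZMod p) - 8774485200 ∧
      (x * (y ^ 2 - 36) ≠ 0 ∨ y * (x ^ 2 - 36) ≠ 0) := by
  have : Fact p.Prime := ⟨hp⟩
  have char_ne_two : ringChar (ZMod p) ≠ 2 := by rw [ZMod.ringChar_zmod_n]; omega
  have h36 : (36 : ZMod p) ≠ 0 := fun h ↦ by
    have dvd_six : p ∣ 6 := hp.dvd_of_dvd_pow ((ZMod.natCast_eq_zero_iff (6 ^ 2) p).mp
      (by rw [← h]; norm_num))
    linarith [Nat.le_of_dvd (by norm_num) dvd_six]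
  rw [← ZMod.intCast_zmod_eq_zero_iff_dvd] at h1 h2
  push_cast at h1 h2
  exact stmt4_general char_ne_two (by rwa [ZMod.card]) (neg_ne_zero.mpr h36) h36 h36 h1
    fun h ↦ h2 (by linear_combination h)
end

section
/- Let x, y, z be elements of ℤ/13ℤ satisfying (x²−36)·(y²−36)·(z²−36) = 1 in ℤ/13ℤ. Then at least one of the six elements x−6, x+6, y−6, y+6, z−6, z+6 of ℤ/13ℤ is not a square in ℤ/13ℤ. -/
/-!
Suppose `x - 6 = s²` and `x + 6 = t²`. Since `-12 = 1` in `ℤ/13ℤ`, the point `(s, t)` lies on the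
hyperbola `s² - t² = 1`, so `w = s + t` is a unit with inverse `s - t`, and
`16 s² t² = (w² - w⁻²)² = w⁴ + w⁻⁴ - 2`. As `w¹² = 1`, the element `w⁴` is a cube root of unity, so
this is `0` or `-3`; equivalently `36 - x² = -s² t²` is idempotent. Idempotents are closed under
multiplication, but the product of the three elements `36 - x²`, `36 - y²`, `36 - z²` is `-1`,
which is not idempotent.
-/

section CommRing

variable {R : Type*} [CommRing R]

theorem add_sub_two_mul_add_add_one_eq_zero_of_cube_eq_one {a b : R} (hab : a * b = 1)
    (ha : a ^ 3 = 1) : (a + b - 2) * (a + b + 1) = 0 := by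
  have a_sq : a ^ 2 = b := by linear_combination b * ha - a ^ 2 * hab
  have b_sq : b ^ 2 = a := by linear_combination a * hab - b * a_sq
  linear_combination a_sq + b_sq + 2 * hab

theorem sixteen_mul_sq_mul_sq_of_sq_sub_sq_eq_one {s t : R} (hst : s ^ 2 - t ^ 2 = 1) :
    16 * (s ^ 2 * t ^ 2) = (s + t) ^ 4 + (s - t) ^ 4 - 2 := by
  linear_combination (-2) * (s ^ 2 - t ^ 2 + 1) * hst

theorem sixteen_mul_sq_mul_sq_mul_add_three_eq_zero {s t : R} (hst : s ^ 2 - t ^ 2 = 1)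
    (hpow : (s + t) ^ 12 = 1) :
    16 * (s ^ 2 * t ^ 2) * (16 * (s ^ 2 * t ^ 2) + 3) = 0 := by
  have inverse : (s + t) ^ 4 * (s - t) ^ 4 = 1 := by
    rw [← mul_pow, ← sq_sub_sq, hst, one_pow]
  have cube : ((s + t) ^ 4) ^ 3 = 1 := by rw [← pow_mul, hpow]
  rw [sixteen_mul_sq_mul_sq_of_sq_sub_sq_eq_one hst]
  linear_combination add_sub_two_mul_add_add_one_eq_zero_of_cube_eq_one inverse cube

end CommRing

theorem isIdempotentElem_neg_sq_mul_sq_of_sq_sub_sq_eq_one {s t : ZMod 13}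
    (hst : s ^ 2 - t ^ 2 = 1) : IsIdempotentElem (-(s ^ 2 * t ^ 2)) := by
  have : Fact (Nat.Prime 13) := ⟨by norm_num⟩
  have add_ne_zero : s + t ≠ 0 := by
    refine left_ne_zero_of_mul_eq_one (b := s - t) ?_
    rw [← sq_sub_sq, hst]
  have quadratic := sixteen_mul_sq_mul_sq_mul_add_three_eq_zero hst
    (ZMod.pow_card_sub_one_eq_one add_ne_zero)
  have thirteen : (13 : ZMod 13) = 0 := rfl
  rw [IsIdempotentElem]
  -- `3 * 16 ^ 2 = 1 + 13 * 59` and `3 * 16 * 3 = 1 + 13 * 11`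
  linear_combination 3 * quadratic -
    (59 * (s ^ 2 * t ^ 2) ^ 2 + 11 * (s ^ 2 * t ^ 2)) * thirteen

theorem isIdempotentElem_thirtySix_sub_sq {x : ZMod 13} (hsub : IsSquare (x - 6))
    (hadd : IsSquare (x + 6)) : IsIdempotentElem (36 - x ^ 2) := by
  obtain ⟨s, hs⟩ := (isSquare_iff_exists_sq _).mp hsub
  obtain ⟨t, ht⟩ := (isSquare_iff_exists_sq _).mp hadd
  have hyperbola : s ^ 2 - t ^ 2 = 1 := by
    have thirteen : (13 : ZMod 13) = 0 := rfl
    linear_combination ht - hs - thirteen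
  have factor : 36 - x ^ 2 = -(s ^ 2 * t ^ 2) := by
    rw [← hs, ← ht]
    ring
  exact factor ▸ isIdempotentElem_neg_sq_mul_sq_of_sq_sub_sq_eq_one hyperbola

/-- residue computation at 13 in Theorem 5.2. If `x, y, z ∈ ℤ/13ℤ` satisfy
`(x²−36)(y²−36)(z²−36) = 1`, then one of `x ± 6`, `y ± 6`, `z ± 6` is a nonsquare in `ℤ/13ℤ`. -/
theorem stmt5 (x y z : ZMod 13)
    (h : (x ^ 2 - 36) * (y ^ 2 - 36) * (z ^ 2 - 36) = 1) :
    ¬ IsSquare (x - 6) ∨ ¬ IsSquare (x + 6) ∨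
    ¬ IsSquare (y - 6) ∨ ¬ IsSquare (y + 6) ∨
    ¬ IsSquare (z - 6) ∨ ¬ IsSquare (z + 6) := by
  by_contra! hsquare
  obtain ⟨hx_sub, hx_add, hy_sub, hy_add, hz_sub, hz_add⟩ := hsquare
  have idempotent : IsIdempotentElem ((36 - x ^ 2) * (36 - y ^ 2) * (36 - z ^ 2)) :=
    ((isIdempotentElem_thirtySix_sub_sq hx_sub hx_add).mul
      (isIdempotentElem_thirtySix_sub_sq hy_sub hy_add)).mul
      (isIdempotentElem_thirtySix_sub_sq hz_sub hz_add)
  have product : (36 - x ^ 2) * (36 - y ^ 2) * (36 - z ^ 2) = -1 := by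
    linear_combination -h
  rw [product] at idempotent
  exact absurd idempotent.eq (by decide)
end

section
/- Let P = 2³·3·5·7·11·13·31·433·2017·3253·8501·32687·46649·4057231. Let ℓ be a positive integer with ℓ ≡ 1 (mod P) such that for every prime number p dividing ℓ, 13 is a square in ℤ/pℤ. Then there are no integers x, y, z satisfying (x²−36)·(y²−36)·(z²−36) + 468·(xyz−4330)² = ℓ². -/
/-!
An integral point writes `N = (x² - 36)(y² - 36)(z² - 36)` as `ℓ² - 13w²` with `w` even. A prime
dividing `N` either divides `ℓ` or makes `13w² ≡ ℓ²` with `ℓ` invertible, so `13` is a square modulo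
it; by quadratic reciprocity every divisor of `N` is then a square modulo `13`. This applies to
`t - 6` and `t + 6` for `t = x, y, z`, and forces `t² - 36 ≡ 0` or `-1`. Hence `ℓ² ≡ N ≡ 0` or `-1`
modulo `13`, whereas `ℓ` is itself a nonzero square modulo `13` and `-1` is not a fourth power.
-/

lemma isSquare_natCast_of_forall_prime_dvd {R : Type*} [CommSemiring R] {n : ℕ}
    (h : ∀ p : ℕ, p.Prime → p ∣ n → IsSquare (p : R)) : IsSquare (n : R) := by
  induction n using induction_on_primes with
  | zero => simp
  | one => simp
  | prime_mul p a hp ih =>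
    rw [Nat.cast_mul]
    exact (h p hp (dvd_mul_right p a)).mul (ih fun q hq hqa ↦ h q hq (hqa.mul_left p))

lemma isSquare_intCast_of_forall_prime_dvd {R : Type*} [CommRing R] (hneg : IsSquare (-1 : R))
    {n : ℤ} (h : ∀ p : ℕ, p.Prime → (p : ℤ) ∣ n → IsSquare (p : R)) : IsSquare (n : R) := by
  have habs : IsSquare (n.natAbs : R) :=
    isSquare_natCast_of_forall_prime_dvd fun p hp hpn ↦ h p hp (Int.natCast_dvd.2 hpn)
  rcases Int.natAbs_eq n with hn | hn <;> rw [hn]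
  · simpa only [Int.cast_natCast] using habs
  · simpa only [Int.cast_neg, Int.cast_natCast, neg_one_mul] using hneg.mul habs

lemma isSquare_of_mul_sq_eq_sq {G : Type*} [CommGroupWithZero G] {a b c : G} (hc : c ≠ 0)
    (h : a * b ^ 2 = c ^ 2) : IsSquare a := by
  have hb : b ^ 2 ≠ 0 := right_ne_zero_of_mul (h ▸ pow_ne_zero 2 hc)
  rw [eq_div_of_mul_eq hb h, ← div_pow]
  exact IsSquare.sq (c / b)

lemma isSquare_intCast_zmod_of_dvd_sq_sub_mul_sq {p : ℕ} [Fact p.Prime] {d a b : ℤ}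
    (ha : (p : ℤ) ∣ a → IsSquare (d : ZMod p)) (hp : (p : ℤ) ∣ a ^ 2 - d * b ^ 2) :
    IsSquare (d : ZMod p) := by
  by_cases hpa : (p : ℤ) ∣ a
  · exact ha hpa
  · have ha0 : (a : ZMod p) ≠ 0 := mt (ZMod.intCast_zmod_eq_zero_iff_dvd a p).1 hpa
    have hdb : (d : ZMod p) * (b : ZMod p) ^ 2 = (a : ZMod p) ^ 2 := by
      exact_mod_cast (ZMod.intCast_eq_intCast_iff_dvd_sub (d * b ^ 2) (a ^ 2) p).2 hp
    exact isSquare_of_mul_sq_eq_sq ha0 hdb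

lemma isSquare_intCast_zmod_of_odd_of_forall_prime_dvd {q : ℕ} [Fact q.Prime]
    (hq : q % 4 = 1) {m : ℤ} (hm : Odd m)
    (h : ∀ p : ℕ, p.Prime → (p : ℤ) ∣ m → IsSquare (q : ZMod p)) : IsSquare (m : ZMod q) := by
  have hneg : IsSquare (-1 : ZMod q) := ZMod.exists_sq_eq_neg_one_iff.2 (by lia)
  refine isSquare_intCast_of_forall_prime_dvd hneg fun p hp hpm ↦ ?_
  have hp2 : p ≠ 2 := by
    rintro rfl
    exact Int.not_even_iff_odd.2 hm (even_iff_two_dvd.2 hpm)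
  have : Fact p.Prime := ⟨hp⟩
  exact (ZMod.exists_sq_eq_prime_iff_of_mod_four_eq_one hq hp2).2 (h p hp hpm)

lemma isSquare_intCast_zmod_of_dvd_odd_sq_sub_mul_sq {q : ℕ} [Fact q.Prime] (hq : q % 4 = 1)
    {a b m : ℤ} (hodd : Odd (a ^ 2 - q * b ^ 2))
    (ha : ∀ p : ℕ, p.Prime → (p : ℤ) ∣ a → IsSquare (q : ZMod p)) (hm : m ∣ a ^ 2 - q * b ^ 2) :
    IsSquare (m : ZMod q) := by
  have hm_odd : Odd m := by
    obtain ⟨c, hc⟩ := hm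
    exact Int.Odd.of_mul_left (hc ▸ hodd)
  refine isSquare_intCast_zmod_of_odd_of_forall_prime_dvd hq hm_odd fun p hp hpm ↦ ?_
  have : Fact p.Prime := ⟨hp⟩
  exact_mod_cast isSquare_intCast_zmod_of_dvd_sq_sub_mul_sq (d := q)
    (fun hpa ↦ by exact_mod_cast ha p hp hpa) (hpm.trans hm)

lemma zmod_thirteen_sq_sub_eq_zero_or_neg_one :
    ∀ t : ZMod 13, IsSquare (t - 6) → IsSquare (t + 6) → t ^ 2 - 36 = 0 ∨ t ^ 2 - 36 = -1 := by
  decide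

lemma zmod_thirteen_sq_ne_neg_one_of_isSquare : ∀ a : ZMod 13, IsSquare a → a ^ 2 ≠ -1 := by
  decide

theorem stmt7_general {ℓ : ℤ} (hodd : Odd ℓ) (h13 : ¬ 13 ∣ ℓ)
    (hqr : ∀ p : ℕ, p.Prime → (p : ℤ) ∣ ℓ → IsSquare (13 : ZMod p)) (x y z v : ℤ) :
    (x ^ 2 - 36) * (y ^ 2 - 36) * (z ^ 2 - 36) + 52 * v ^ 2 ≠ ℓ ^ 2 := by
  intro h
  have : Fact (Nat.Prime 13) := ⟨by norm_num⟩
  have hN : (x ^ 2 - 36) * (y ^ 2 - 36) * (z ^ 2 - 36) = ℓ ^ 2 - 13 * (2 * v) ^ 2 := by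
    linear_combination h
  have hNodd : Odd (ℓ ^ 2 - 13 * (2 * v) ^ 2) :=
    hodd.pow.sub_even (((even_two_mul v).pow_of_ne_zero two_ne_zero).mul_left 13)
  have hdvd {m : ℤ} (hm : m ∣ ℓ ^ 2 - 13 * (2 * v) ^ 2) : IsSquare (m : ZMod 13) :=
    isSquare_intCast_zmod_of_dvd_odd_sq_sub_mul_sq (by norm_num) hNodd hqr hm
  have hfactor {t : ℤ} (ht : t ^ 2 - 36 ∣ ℓ ^ 2 - 13 * (2 * v) ^ 2) :
      (t : ZMod 13) ^ 2 - 36 = 0 ∨ (t : ZMod 13) ^ 2 - 36 = -1 := by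
    have hsub := hdvd (Dvd.dvd.trans ⟨t + 6, by ring⟩ ht : t - 6 ∣ _)
    have hadd := hdvd (Dvd.dvd.trans ⟨t - 6, by ring⟩ ht : t + 6 ∣ _)
    push_cast at hsub hadd
    exact zmod_thirteen_sq_sub_eq_zero_or_neg_one t hsub hadd
  have hx := hfactor (hN ▸ (dvd_mul_right _ _).mul_right _ : x ^ 2 - 36 ∣ _)
  have hy := hfactor (hN ▸ (dvd_mul_left _ _).mul_right _ : y ^ 2 - 36 ∣ _)
  have hz := hfactor (hN ▸ dvd_mul_left _ _ : z ^ 2 - 36 ∣ _)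
  have hℓ01 : (ℓ : ZMod 13) ^ 2 = 0 ∨ (ℓ : ZMod 13) ^ 2 = -1 := by
    have hmod := congrArg (Int.cast : ℤ → ZMod 13) hN
    push_cast at hmod
    rw [show (13 : ZMod 13) = 0 from rfl, zero_mul, sub_zero] at hmod
    rw [← hmod]
    rcases hx with hx | hx <;> rcases hy with hy | hy <;> rcases hz with hz | hz <;>
      simp [hx, hy, hz]
  have hℓ0 : (ℓ : ZMod 13) ^ 2 ≠ 0 :=
    pow_ne_zero 2 (mt (ZMod.intCast_zmod_eq_zero_iff_dvd ℓ 13).1 h13)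
  have hℓ1 : (ℓ : ZMod 13) ^ 2 ≠ -1 :=
    zmod_thirteen_sq_ne_neg_one_of_isSquare _ <|
      isSquare_intCast_zmod_of_odd_of_forall_prime_dvd (by norm_num) hodd hqr
  exact hℓ01.elim hℓ0 hℓ1

/-- Theorem 5.2. Let `ℓ` be a positive integer, `ℓ ≡ 1 (mod P)`, such that
`13` is a quadratic residue modulo every prime divisor of `ℓ`. Then the Markoff-type K3 surface
`(x²−36)(y²−36)(z²−36) + 468(xyz−4330)² = ℓ²` has no integral points. -/
theorem stmt7 (ℓ : ℤ) (hℓ : 0 < ℓ)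
    (hmod : ℓ ≡ 1 [ZMOD (2 ^ 3 * 3 * 5 * 7 * 11 * 13 * 31 * 433 * 2017 * 3253 * 8501 *
      32687 * 46649 * 4057231)])
    (hqr : ∀ p : ℕ, p.Prime → (p : ℤ) ∣ ℓ → IsSquare (13 : ZMod p)) :
    ¬ ∃ x y z : ℤ,
      (x ^ 2 - 36) * (y ^ 2 - 36) * (z ^ 2 - 36) + 468 * (x * y * z - 4330) ^ 2 = ℓ ^ 2 := by
  rintro ⟨x, y, z, h⟩
  have hmod26 : ℓ ≡ 1 [ZMOD 26] := hmod.of_dvd (by norm_num)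
  exact stmt7_general (by grind [Int.ModEq]) (by grind [Int.ModEq]) hqr
    x y z (3 * (x * y * z - 4330)) (by linear_combination h)
end

section
/- There are no integers x, y, z satisfying (x²−36)·(y²−36)·(z²−36) + 468·(xyz−4330)² = 1. -/
/-!
Put `u = 6 * (xyz - 4330)`, so that the equation reads
`(x² - 36)(y² - 36)(z² - 36) = 1 - 13u²`. Every divisor `n` of `13u² - 1` makes `13` a square modulo
`n`, so by quadratic reciprocity every odd such `n` is a nonzero square modulo `13`: this is the
reciprocity law behind the Brauer–Manin obstruction. Applied to the divisors `x - 6` and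
`x + 6`, it forces `x² ≡ 9` and hence `x² - 36 ≡ -1` modulo `13`, and likewise for `y` and `z`. The
product of the three factors is then `-1` modulo `13`, whereas `1 - 13u²` is `1`.
-/

open scoped NumberTheorySymbols

lemma jacobiSym_eq_one_of_dvd_mul_sq_sub_one {a u : ℤ} {n : ℕ} (h : (n : ℤ) ∣ a * u ^ 2 - 1) :
    J(a | n) = 1 := by
  have mul_sq_eq_one : J(a | n) * J(u | n) ^ 2 = 1 := by
    rw [← jacobiSym.pow_left, ← jacobiSym.mul_left,
      jacobiSym.mod_left' (Int.modEq_iff_dvd.mpr h).symm, jacobiSym.one_left]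
  rcases jacobiSym.trichotomy u n with hu | hu | hu
  · simp [hu] at mul_sq_eq_one
  · simpa [hu] using mul_sq_eq_one
  · simpa [hu] using mul_sq_eq_one

lemma jacobiSym_natAbs_of_mod_four_eq_one {a : ℕ} (ha : a % 4 = 1) (n : ℤ) :
    J(n.natAbs | a) = J(n | a) := by
  rcases n.natAbs_eq with hn | hn
  · rw [← hn]
  · conv_rhs => rw [hn]
    rw [jacobiSym.neg _ (Nat.odd_iff.mpr (Nat.odd_of_mod_four_eq_one ha)),
      ZMod.χ₄_nat_one_mod_four ha, one_mul]

lemma jacobiSym_eq_one_of_odd_of_dvd_mul_sq_sub_one {a : ℕ} (ha : a % 4 = 1) {n u : ℤ}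
    (hn : Odd n) (h : n ∣ a * u ^ 2 - 1) : J(n | a) = 1 := by
  rw [← jacobiSym_natAbs_of_mod_four_eq_one ha,
    ← jacobiSym.quadratic_reciprocity_one_mod_four ha (Int.natAbs_odd.mpr hn)]
  exact jacobiSym_eq_one_of_dvd_mul_sq_sub_one (Int.natAbs_dvd.mpr h)

instance fact_prime_thirteen : Fact (Nat.Prime 13) := ⟨by norm_num⟩

lemma quadraticChar_zmod_thirteen_eq_one {n u : ℤ} (hn : Odd n) (h : n ∣ 13 * u ^ 2 - 1) :
    quadraticChar (ZMod 13) n = 1 := by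
  change legendreSym 13 n = 1
  rw [jacobiSym.legendreSym.to_jacobiSym]
  exact jacobiSym_eq_one_of_odd_of_dvd_mul_sq_sub_one (by norm_num) hn h

lemma sq_sub_thirtySix_eq_neg_one_of_quadraticChar : ∀ x : ZMod 13,
    quadraticChar (ZMod 13) (x - 6) = 1 → quadraticChar (ZMod 13) (x + 6) = 1 →
      x ^ 2 - 36 = -1 := by
  decide

lemma sq_sub_thirtySix_eq_neg_one_of_dvd {x u : ℤ} (hu : Even u)
    (h : x ^ 2 - 36 ∣ 13 * u ^ 2 - 1) : (x : ZMod 13) ^ 2 - 36 = -1 := by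
  have factorization : x ^ 2 - 36 = (x - 6) * (x + 6) := by ring
  have odd_mul_sq_sub_one : Odd (13 * u ^ 2 - 1) := by simp [hu, parity_simps]
  have odd_of_dvd {n : ℤ} : n ∣ 13 * u ^ 2 - 1 → Odd n := by
    rintro ⟨m, hm⟩
    exact Int.Odd.of_mul_left (hm ▸ odd_mul_sq_sub_one)
  have sub_dvd : x - 6 ∣ 13 * u ^ 2 - 1 := (Dvd.intro _ factorization.symm).trans h
  have add_dvd : x + 6 ∣ 13 * u ^ 2 - 1 := (Dvd.intro_left _ factorization.symm).trans h
  apply sq_sub_thirtySix_eq_neg_one_of_quadraticChar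
  · exact_mod_cast quadraticChar_zmod_thirteen_eq_one (odd_of_dvd sub_dvd) sub_dvd
  · exact_mod_cast quadraticChar_zmod_thirteen_eq_one (odd_of_dvd add_dvd) add_dvd

theorem stmt8_general {ι : Type*} {s : Finset ι} (hs : Odd s.card) (x : ι → ℤ) {u : ℤ}
    (hu : Even u) : ∏ i ∈ s, (x i ^ 2 - 36) + 13 * u ^ 2 ≠ 1 := by
  intro h
  have prod_dvd : ∏ i ∈ s, (x i ^ 2 - 36) ∣ 13 * u ^ 2 - 1 := ⟨-1, by linarith⟩
  have factor_eq : ∀ i ∈ s, (x i : ZMod 13) ^ 2 - 36 = -1 := fun i hi ↦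
    sq_sub_thirtySix_eq_neg_one_of_dvd hu ((Finset.dvd_prod_of_mem _ hi).trans prod_dvd)
  have prod_eq : ∏ i ∈ s, ((x i : ZMod 13) ^ 2 - 36) = -1 := by
    rw [Finset.prod_congr rfl factor_eq, Finset.prod_const, hs.neg_one_pow]
  have reduction : ∏ i ∈ s, ((x i : ZMod 13) ^ 2 - 36) + 13 * (u : ZMod 13) ^ 2 = 1 := by
    exact_mod_cast congrArg (Int.cast : ℤ → ZMod 13) h
  have thirteen_eq_zero : (13 : ZMod 13) = 0 := by decide
  rw [prod_eq, thirteen_eq_zero, zero_mul, add_zero] at reduction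
  exact absurd reduction (by decide)

/-- Example 5.3. There are no integers `x, y, z` with
`(x²−36)(y²−36)(z²−36) + 468(xyz−4330)² = 1`. -/
theorem stmt8 :
    ¬ ∃ x y z : ℤ,
      (x ^ 2 - 36) * (y ^ 2 - 36) * (z ^ 2 - 36) + 468 * (x * y * z - 4330) ^ 2 = 1 := by
  rintro ⟨x, y, z, h⟩
  refine stmt8_general (s := Finset.univ) (by decide) ![x, y, z]
    (u := 6 * (x * y * z - 4330)) (Even.mul_right (by decide) _) ?_
  simp only [Fin.prod_univ_three, Matrix.cons_val]
  linarith
end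

section
/- Let a, b, c, d, e be nonzero integers with a ≡ 0, b ≡ −1, c ≡ 1, d ≡ 1, e ≡ 4 (mod 7), and assume a·d ≠ b² and d² ≠ b·e. Then the set of triples of integers (x, y, z) satisfying a·x²y²z² + b·(x²y² + x²z² + y²z²) + c·xyz + d·(x² + y² + z²) + e = 0 is finite. -/
/-!
Along an infinite sequence of distinct integral points, if every coordinate takes each value only
finitely often, then all three tend to infinity, and dividing the equation by `(xyz)²` gives `a = 0`
in the limit. The equation being symmetric, it thus suffices that each slice `x = const` is finite.
The same argument on a slice, dividing by `(yz)²`, has the limit `a x² + b`, which is nonzero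
because it is `-1` modulo `7`. Finally, for fixed `x` and `y` the equation is a quadratic in `z`
whose coefficients do not all vanish, since `c ≠ 0` and `d² ≠ be`.
-/

open Filter Bornology

/-- The symmetric `(2,2,2)`-form whose zero locus is the affine Markoff-type K3 surface. -/
def markoffForm {R : Type*} [CommRing R] (a b c d e x y z : R) : R :=
  a * x ^ 2 * y ^ 2 * z ^ 2 + b * (x ^ 2 * y ^ 2 + x ^ 2 * z ^ 2 + y ^ 2 * z ^ 2) +
    c * (x * y * z) + d * (x ^ 2 + y ^ 2 + z ^ 2) + e

section CommRing

variable {R : Type*} [CommRing R]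

theorem markoffForm_swap_left (a b c d e x y z : R) :
    markoffForm a b c d e x y z = markoffForm a b c d e y x z := by
  unfold markoffForm; ring

theorem markoffForm_swap_right (a b c d e x y z : R) :
    markoffForm a b c d e x y z = markoffForm a b c d e x z y := by
  unfold markoffForm; ring

theorem markoffForm_rotate (a b c d e x y z : R) :
    markoffForm a b c d e x y z = markoffForm a b c d e y z x := by
  unfold markoffForm; ring

theorem markoffForm_eq_quadratic (a b c d e x y z : R) :
    markoffForm a b c d e x y z =
      (a * x ^ 2 * y ^ 2 + b * (x ^ 2 + y ^ 2) + d) * z ^ 2 + (c * x * y) * z +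
        (b * x ^ 2 * y ^ 2 + d * (x ^ 2 + y ^ 2) + e) := by
  unfold markoffForm; ring

theorem intCast_markoffForm (a b c d e x y z : ℤ) :
    ((markoffForm a b c d e x y z : ℤ) : R) = markoffForm (a : R) b c d e x y z := by
  simp [markoffForm]

theorem mul_sq_add_ne_zero_of_dvd {m a b : R} (ha : m ∣ a) (hb : ¬m ∣ b) (x : R) :
    a * x ^ 2 + b ≠ 0 :=
  fun h ↦ hb ((dvd_add_right (ha.mul_right _)).mp (h ▸ dvd_zero m))

variable [IsDomain R]

theorem finite_setOf_quadratic_eq_zero {A B C : R} (h : ¬(A = 0 ∧ B = 0 ∧ C = 0)) :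
    {z : R | A * z ^ 2 + B * z + C = 0}.Finite := by
  have hp : (Cubic.mk 0 A B C).toPoly ≠ 0 := by
    rw [← Cubic.of_d_eq_zero', Ne, Cubic.toPoly_injective]
    simpa [Cubic.ext_iff] using h
  simpa [Cubic.toPoly, Polynomial.IsRoot] using Polynomial.finite_setOfPred_isRoot hp

theorem finite_setOf_markoffForm_eq_zero_of_fixed_pair {a b c d e : R} (hc : c ≠ 0)
    (hde : d ^ 2 ≠ b * e) (x y : R) : {z | markoffForm a b c d e x y z = 0}.Finite := by
  simp only [markoffForm_eq_quadratic]
  refine finite_setOf_quadratic_eq_zero fun ⟨hA, hB, hC⟩ ↦ hde ?_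
  have hxy : x = 0 ∨ y = 0 := by simpa [hc] using hB
  rcases hxy with rfl | rfl <;> linear_combination d * hA - b * hC

end CommRing

section Infinity

variable {ι 𝕜 : Type*}

theorem markoffForm_eq_sq_mul_reverse [Field 𝕜] (a b c d e : 𝕜) {x y z : 𝕜} (hx : x ≠ 0)
    (hy : y ≠ 0) (hz : z ≠ 0) :
    markoffForm a b c d e x y z = (x * y * z) ^ 2 * markoffForm e d c b a x⁻¹ y⁻¹ z⁻¹ := by
  unfold markoffForm; field_simp; ring

theorem markoffForm_eq_sq_mul_reverse_of_fixed [Field 𝕜] (a b c d e x : 𝕜) {y z : 𝕜}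
    (hy : y ≠ 0) (hz : z ≠ 0) :
    markoffForm a b c d e x y z = (y * z) ^ 2 *
      ((d * x ^ 2 + e) * (y⁻¹ ^ 2 * z⁻¹ ^ 2) + (b * x ^ 2 + d) * (y⁻¹ ^ 2 + z⁻¹ ^ 2) +
        c * x * (y⁻¹ * z⁻¹) + (a * x ^ 2 + b)) := by
  unfold markoffForm; field_simp; ring

variable [NormedField 𝕜] {l : Filter ι} {a : 𝕜}

theorem eventually_markoffForm_ne_zero (b c d e : 𝕜) {x y z : ι → 𝕜}
    (ha : a ≠ 0) (hx : Tendsto x l (cobounded 𝕜)) (hy : Tendsto y l (cobounded 𝕜))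
    (hz : Tendsto z l (cobounded 𝕜)) :
    ∀ᶠ i in l, markoffForm a b c d e (x i) (y i) (z i) ≠ 0 := by
  have hcont : Continuous fun p : 𝕜 × 𝕜 × 𝕜 ↦ markoffForm e d c b a p.1 p.2.1 p.2.2 := by
    unfold markoffForm; fun_prop
  have hlim := (hcont.tendsto (0, 0, 0)).comp <|
    (tendsto_inv₀_cobounded.comp hx).prodMk_nhds <|
      (tendsto_inv₀_cobounded.comp hy).prodMk_nhds (tendsto_inv₀_cobounded.comp hz)
  have hne : markoffForm e d c b a 0 0 0 ≠ 0 := by simpa [markoffForm] using ha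
  filter_upwards [hlim.eventually_ne hne, hx.eventually_ne_cobounded 0,
    hy.eventually_ne_cobounded 0, hz.eventually_ne_cobounded 0] with i hi hxi hyi hzi
  rw [markoffForm_eq_sq_mul_reverse a b c d e hxi hyi hzi]
  exact mul_ne_zero (pow_ne_zero 2 (mul_ne_zero (mul_ne_zero hxi hyi) hzi)) hi

theorem eventually_markoffForm_ne_zero_of_fixed {b : 𝕜} (c d e : 𝕜) {x : 𝕜} {y z : ι → 𝕜}
    (hx : a * x ^ 2 + b ≠ 0) (hy : Tendsto y l (cobounded 𝕜))
    (hz : Tendsto z l (cobounded 𝕜)) :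
    ∀ᶠ i in l, markoffForm a b c d e x (y i) (z i) ≠ 0 := by
  have hcont : Continuous fun p : 𝕜 × 𝕜 ↦
      (d * x ^ 2 + e) * (p.1 ^ 2 * p.2 ^ 2) + (b * x ^ 2 + d) * (p.1 ^ 2 + p.2 ^ 2) +
        c * x * (p.1 * p.2) + (a * x ^ 2 + b) := by
    fun_prop
  have hlim := (hcont.tendsto (0, 0)).comp <|
    (tendsto_inv₀_cobounded.comp hy).prodMk_nhds (tendsto_inv₀_cobounded.comp hz)
  filter_upwards [hlim.eventually_ne (by simpa using hx), hy.eventually_ne_cobounded 0,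
    hz.eventually_ne_cobounded 0] with i hi hyi hzi
  rw [markoffForm_eq_sq_mul_reverse_of_fixed a b c d e x hyi hzi]
  exact mul_ne_zero (pow_ne_zero 2 (mul_ne_zero hyi hzi)) hi

end Infinity

section FiniteFibers

variable {X α β : Type*} {Z : Set X}

-- `cofinite ⊓ 𝓟 Z` plays the role of a sequence of pairwise distinct points of `Z`.
theorem finite_of_eventually_notMem (h : ∀ᶠ p in cofinite ⊓ 𝓟 Z, p ∉ Z) : Z.Finite := by
  simpa [eventually_inf_principal] using h

theorem tendsto_cofinite_of_finite_fibers {f : X → α} (hf : ∀ a, {p ∈ Z | f p = a}.Finite) :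
    Tendsto f (cofinite ⊓ 𝓟 Z) cofinite := by
  refine le_cofinite_iff_eventually_ne.mpr fun a ↦ ?_
  simpa [eventually_inf_principal] using hf a

theorem finite_fiber_of_injective_prodMk {f : X → α} {g : X → β} {W : Set β} {a : α}
    (hfg : Function.Injective fun p ↦ (f p, g p)) (hW : W.Finite)
    (hZW : ∀ p ∈ Z, f p = a → g p ∈ W) : {p ∈ Z | f p = a}.Finite :=
  hW.of_injOn (fun p hp ↦ hZW p hp.1 hp.2) fun _ hp _ hq hpq ↦
    hfg (Prod.ext (hp.2.trans hq.2.symm) hpq)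

theorem tendsto_intCast_cobounded_of_finite_fibers {f : X → ℤ} {g : X → β} {W : ℤ → Set β}
    (hfg : Function.Injective fun p ↦ (f p, g p)) (hW : ∀ n, (W n).Finite)
    (hZW : ∀ p ∈ Z, g p ∈ W (f p)) :
    Tendsto (fun p ↦ (f p : ℝ)) (cofinite ⊓ 𝓟 Z) (cobounded ℝ) := by
  rw [Metric.cobounded_eq_cocompact]
  refine Int.tendsto_coe_cofinite.comp (tendsto_cofinite_of_finite_fibers fun n ↦ ?_)
  exact finite_fiber_of_injective_prodMk hfg (hW n) fun p hp hpn ↦ hpn ▸ hZW p hp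

end FiniteFibers

section IntegralPoints

variable {a b c d e : ℤ}

theorem finite_setOf_markoffForm_eq_zero_of_fixed (hc : c ≠ 0) (hde : d ^ 2 ≠ b * e) {x : ℤ}
    (hx : a * x ^ 2 + b ≠ 0) : {q : ℤ × ℤ | markoffForm a b c d e x q.1 q.2 = 0}.Finite := by
  have hroots (y : ℤ) := finite_setOf_markoffForm_eq_zero_of_fixed_pair (a := a) hc hde x y
  set Z := {q : ℤ × ℤ | markoffForm a b c d e x q.1 q.2 = 0}
  have hfst : Tendsto (fun q : ℤ × ℤ ↦ (q.1 : ℝ)) (cofinite ⊓ 𝓟 Z) (cobounded ℝ) :=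
    tendsto_intCast_cobounded_of_finite_fibers (g := Prod.snd) Function.injective_id hroots
      fun _ hq ↦ hq
  have hsnd : Tendsto (fun q : ℤ × ℤ ↦ (q.2 : ℝ)) (cofinite ⊓ 𝓟 Z) (cobounded ℝ) :=
    tendsto_intCast_cobounded_of_finite_fibers (g := Prod.fst) Prod.swap_injective hroots
      fun q hq ↦ (markoffForm_swap_right a b c d e x q.2 q.1).trans hq
  have hxR : (a : ℝ) * (x : ℝ) ^ 2 + b ≠ 0 := by exact_mod_cast hx
  refine finite_of_eventually_notMem ?_
  filter_upwards [eventually_markoffForm_ne_zero_of_fixed (c : ℝ) d e hxR hfst hsnd] with q hq hqZ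
  exact hq (by rw [← intCast_markoffForm, hqZ, Int.cast_zero])

theorem stmt11_general (ha : a ≠ 0) (hc : c ≠ 0) (hde : d ^ 2 ≠ b * e)
    (hab : ∀ x, a * x ^ 2 + b ≠ 0) :
    {P : ℤ × ℤ × ℤ | markoffForm a b c d e P.1 P.2.1 P.2.2 = 0}.Finite := by
  have hslice (x : ℤ) := finite_setOf_markoffForm_eq_zero_of_fixed hc hde (hab x)
  set Z := {P : ℤ × ℤ × ℤ | markoffForm a b c d e P.1 P.2.1 P.2.2 = 0}
  have hx : Tendsto (fun P : ℤ × ℤ × ℤ ↦ (P.1 : ℝ)) (cofinite ⊓ 𝓟 Z) (cobounded ℝ) :=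
    tendsto_intCast_cobounded_of_finite_fibers (g := Prod.snd) Function.injective_id hslice
      fun _ hP ↦ hP
  have hy : Tendsto (fun P : ℤ × ℤ × ℤ ↦ (P.2.1 : ℝ)) (cofinite ⊓ 𝓟 Z) (cobounded ℝ) :=
    tendsto_intCast_cobounded_of_finite_fibers (g := fun P ↦ (P.1, P.2.2)) (fun _ _ _ ↦ by grind)
      hslice fun P hP ↦ (markoffForm_swap_left a b c d e P.2.1 P.1 P.2.2).trans hP
  have hz : Tendsto (fun P : ℤ × ℤ × ℤ ↦ (P.2.2 : ℝ)) (cofinite ⊓ 𝓟 Z) (cobounded ℝ) :=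
    tendsto_intCast_cobounded_of_finite_fibers (g := fun P ↦ (P.1, P.2.1)) (fun _ _ _ ↦ by grind)
      hslice fun P hP ↦ (markoffForm_rotate a b c d e P.2.2 P.1 P.2.1).trans hP
  have haR : (a : ℝ) ≠ 0 := Int.cast_ne_zero.mpr ha
  refine finite_of_eventually_notMem ?_
  filter_upwards [eventually_markoffForm_ne_zero (b : ℝ) c d e haR hx hy hz] with P hP hPZ
  exact hP (by rw [← intCast_markoffForm, hPZ, Int.cast_zero])

end IntegralPoints

/-- Proposition 6.1. For nonzero integers `a, b, c, d, e` with
`a ≡ 0, b ≡ −1, c ≡ 1, d ≡ 1, e ≡ 4 (mod 7)`, `ad ≠ b²` and `d² ≠ be`, the set of integral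
points of the affine Markoff-type K3 surface
`a x²y²z² + b(x²y²+x²z²+y²z²) + c xyz + d(x²+y²+z²) + e = 0` is finite. -/
theorem stmt11 (a b c d e : ℤ) (ha0 : a ≠ 0) (hb0 : b ≠ 0) (hc0 : c ≠ 0) (hd0 : d ≠ 0)
    (he0 : e ≠ 0) (ha7 : a ≡ 0 [ZMOD 7]) (hb7 : b ≡ -1 [ZMOD 7]) (hc7 : c ≡ 1 [ZMOD 7])
    (hd7 : d ≡ 1 [ZMOD 7]) (he7 : e ≡ 4 [ZMOD 7]) (hnd1 : a * d ≠ b ^ 2)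
    (hnd2 : d ^ 2 ≠ b * e) :
    {P : ℤ × ℤ × ℤ |
      a * P.1 ^ 2 * P.2.1 ^ 2 * P.2.2 ^ 2 +
        b * (P.1 ^ 2 * P.2.1 ^ 2 + P.1 ^ 2 * P.2.2 ^ 2 + P.2.1 ^ 2 * P.2.2 ^ 2) +
        c * (P.1 * P.2.1 * P.2.2) + d * (P.1 ^ 2 + P.2.1 ^ 2 + P.2.2 ^ 2) + e = 0}.Finite := by
  have ha : 7 ∣ a := Int.modEq_zero_iff_dvd.mp ha7
  have hb : ¬7 ∣ b := fun h ↦ absurd (hb7.symm.trans (Int.modEq_zero_iff_dvd.mpr h)) (by decide)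
  exact stmt11_general ha0 hc0 hnd2 (mul_sq_add_ne_zero_of_dvd ha hb)
end

section
/- Let M = ℤ⁸ with standard basis e₁, …, e₈, and let σ : M → M be the ℤ-linear map determined by σ(e₁) = e₁, σ(e₂) = e₂, σ(e₃) = e₃, σ(e₄) = e₁ − e₄, σ(e₅) = e₁ − e₅, σ(e₆) = e₂ − e₆, σ(e₇) = e₂ − e₇, σ(e₈) = e₃ − e₈. Then σ ∘ σ = id, and the quotient abelian group ker(1 + σ) / im(1 − σ) is isomorphic to (ℤ/2ℤ)². -/
/-!
Split `ℤ⁸ = ℤ³ ⊕ ℤ⁵`. Then `σ (a, b) = (a + P b, -b)`, where the columns of the `3 × 5` matrix `P`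
record that `e₄, e₅` lie over `e₁`, `e₆, e₇` over `e₂` and `e₈` over `e₃`. For every `σ` of this
shape, `ker (1 + σ)` consists of the `(a, b)` with `P b = -2a` and `im (1 - σ)` of the `(-P b, 2b)`.
As `ℤ³` has no `2`-torsion, an element `(a, b)` of the kernel is in the image exactly when `b` is
divisible by `2`, so reducing `b` modulo `2` identifies `ker (1 + σ) / im (1 - σ)` with the kernel
of `P` over `ℤ/2ℤ`.
-/

open Matrix

theorem intCast_comp_eq_zero_iff_exists_nsmul {ι : Type*} (k : ℕ) (v : ι → ℤ) :
    (fun i ↦ (v i : ZMod k)) = 0 ↔ ∃ w : ι → ℤ, v = k • w := by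
  constructor
  · intro h
    choose w hw using fun i ↦ (ZMod.intCast_zmod_eq_zero_iff_dvd (v i) k).mp (congrFun h i)
    exact ⟨w, funext fun i ↦ by simpa using hw i⟩
  · rintro ⟨w, rfl⟩
    ext i
    simp

theorem map_intCast_mulVec {R m n : Type*} [Ring R] [Fintype n] (P : Matrix m n ℤ) (v : n → ℤ) :
    P.map (Int.cast : ℤ → R) *ᵥ (fun j ↦ (v j : R)) = fun i ↦ ((P *ᵥ v) i : R) := by
  ext i
  exact ((Int.castRingHom R).map_mulVec P v i).symm

/-- The quotient `ker (1 + σ) / im (1 - σ)`, which is `H¹` of the group of order two whose generator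
acts through `σ` when `σ` is an involution. The image is encoded by its preimage under the inclusion
of the kernel. -/
abbrev InvolutionH1 {R M : Type*} [Ring R] [AddCommGroup M] [Module R M] (σ : Module.End R M) :
    Type _ :=
  LinearMap.ker (1 + σ) ⧸ (LinearMap.range (1 - σ)).comap (LinearMap.ker (1 + σ)).subtype

/-- In the decomposition `e : M ≃ A × B`, the endomorphism `σ` is the block matrix `[1, φ; 0, -1]`:
it fixes `A` and acts as negation on `B` up to the correction `φ : B → A`. -/
def IsNegShear {R M A B : Type*} [Ring R] [AddCommGroup M] [Module R M] [AddCommGroup A]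
    [Module R A] [AddCommGroup B] [Module R B] (σ : Module.End R M) (e : M ≃ₗ[R] A × B)
    (φ : B →ₗ[R] A) : Prop :=
  ∀ x, e (σ x) = ((e x).1 + φ (e x).2, -(e x).2)

namespace IsNegShear

section Module

variable {R M A B : Type*} [Ring R] [AddCommGroup M] [Module R M] [AddCommGroup A] [Module R A]
  [AddCommGroup B] [Module R B] {σ : Module.End R M} {e : M ≃ₗ[R] A × B} {φ : B →ₗ[R] A}

theorem of_basis {ι : Type*} (v : Module.Basis ι R M)
    (h : ∀ i, e (σ (v i)) = ((e (v i)).1 + φ (e (v i)).2, -(e (v i)).2)) : IsNegShear σ e φ := by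
  let shear : A × B →ₗ[R] A × B :=
    (LinearMap.fst R A B + φ ∘ₗ LinearMap.snd R A B).prod (-LinearMap.snd R A B)
  have map_eq : e.toLinearMap ∘ₗ σ = shear ∘ₗ e.toLinearMap := v.ext h
  exact LinearMap.congr_fun map_eq

theorem comp_self (hσ : IsNegShear σ e φ) : σ ∘ₗ σ = LinearMap.id := by
  ext x
  apply e.injective
  simp [hσ _]

theorem mem_ker_one_add_iff (hσ : IsNegShear σ e φ) {x : M} :
    x ∈ LinearMap.ker (1 + σ) ↔ φ (e x).2 = -(2 • (e x).1) := by
  rw [LinearMap.mem_ker, ← e.map_eq_zero_iff, LinearMap.add_apply, map_add, hσ x,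
    eq_neg_iff_add_eq_zero, Prod.ext_iff]
  simp [two_nsmul, add_comm, add_assoc]

theorem mem_range_one_sub_iff (hσ : IsNegShear σ e φ) {x : M} :
    x ∈ LinearMap.range (1 - σ) ↔ ∃ b, e x = (-φ b, 2 • b) := by
  have map_one_sub (y : M) : e ((1 - σ) y) = (-φ (e y).2, 2 • (e y).2) := by
    simp [hσ y, Prod.ext_iff, two_nsmul]
  constructor
  · rintro ⟨y, rfl⟩
    exact ⟨(e y).2, map_one_sub y⟩
  · rintro ⟨b, hb⟩
    refine ⟨e.symm (0, b), e.injective ?_⟩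
    rw [map_one_sub, hb, e.apply_symm_apply]

theorem mem_range_one_sub_iff_of_mem_ker [IsAddTorsionFree A] (hσ : IsNegShear σ e φ) {x : M}
    (hx : x ∈ LinearMap.ker (1 + σ)) :
    x ∈ LinearMap.range (1 - σ) ↔ ∃ b, (e x).2 = 2 • b := by
  rw [hσ.mem_range_one_sub_iff]
  refine exists_congr fun b ↦ ⟨congrArg Prod.snd, fun hb ↦ Prod.ext ?_ hb⟩
  have two_nsmul_fst : 2 • (e x).1 = 2 • -φ b := by
    rw [smul_neg, ← map_nsmul, ← hb, hσ.mem_ker_one_add_iff.mp hx, neg_neg]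
  exact nsmul_right_injective two_ne_zero two_nsmul_fst

end Module

section Matrix

variable {m n M : Type*} [Fintype n] [AddCommGroup M] {σ : Module.End ℤ M}
  {e : M ≃ₗ[ℤ] (m → ℤ) × (n → ℤ)} {P : Matrix m n ℤ}

theorem intCast_snd_mem_ker (hσ : IsNegShear σ e P.mulVecLin) {x : M}
    (hx : x ∈ LinearMap.ker (1 + σ)) :
    (fun j ↦ ((e x).2 j : ZMod 2)) ∈
      LinearMap.ker (P.map (Int.cast : ℤ → ZMod 2)).mulVecLin := by
  rw [LinearMap.mem_ker, mulVecLin_apply, map_intCast_mulVec,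
    intCast_comp_eq_zero_iff_exists_nsmul]
  exact ⟨-(e x).1, by simpa using hσ.mem_ker_one_add_iff.mp hx⟩

/-- Reduction modulo `2` of the second component, from `ker (1 + σ)` to the kernel of `P` over
`ℤ/2ℤ`. -/
def reduceModTwo (hσ : IsNegShear σ e P.mulVecLin) :
    LinearMap.ker (1 + σ) →ₗ[ℤ] LinearMap.ker (P.map (Int.cast : ℤ → ZMod 2)).mulVecLin :=
  AddMonoidHom.toIntLinearMap
    { toFun x := ⟨_, hσ.intCast_snd_mem_ker x.2⟩
      map_zero' := by ext; simp
      map_add' x y := by ext; simp }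

theorem reduceModTwo_surjective (hσ : IsNegShear σ e P.mulVecLin) :
    Function.Surjective hσ.reduceModTwo := by
  rintro ⟨c, hc⟩
  choose b hb using fun j ↦ ZMod.intCast_surjective (c j)
  obtain rfl : (fun j ↦ (b j : ZMod 2)) = c := funext hb
  rw [LinearMap.mem_ker, mulVecLin_apply, map_intCast_mulVec,
    intCast_comp_eq_zero_iff_exists_nsmul] at hc
  obtain ⟨a, ha⟩ := hc
  have lift_mem_ker : e.symm (-a, b) ∈ LinearMap.ker (1 + σ) := by
    simp [hσ.mem_ker_one_add_iff, ha]
  exact ⟨⟨_, lift_mem_ker⟩, by ext; simp [reduceModTwo]⟩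

theorem ker_reduceModTwo (hσ : IsNegShear σ e P.mulVecLin) :
    LinearMap.ker hσ.reduceModTwo =
      (LinearMap.range (1 - σ)).comap (LinearMap.ker (1 + σ)).subtype := by
  ext ⟨x, hx⟩
  rw [Submodule.mem_comap, Submodule.subtype_apply, hσ.mem_range_one_sub_iff_of_mem_ker hx,
    LinearMap.mem_ker, ← Submodule.coe_eq_zero]
  exact intCast_comp_eq_zero_iff_exists_nsmul 2 (e x).2

/-- The isomorphism of `ker (1 + σ) / im (1 - σ)` with the kernel of `P` over `ℤ/2ℤ` induced by
reduction modulo `2`. -/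
noncomputable def involutionH1Equiv (hσ : IsNegShear σ e P.mulVecLin) :
    InvolutionH1 σ ≃ₗ[ℤ] LinearMap.ker (P.map (Int.cast : ℤ → ZMod 2)).mulVecLin :=
  (Submodule.quotEquivOfEq _ _ hσ.ker_reduceModTwo.symm).trans
    (hσ.reduceModTwo.quotKerEquivOfSurjective hσ.reduceModTwo_surjective)

end Matrix

end IsNegShear

/-- The incidence matrix of the classes `D₁, D₂, D₃` (rows) with the classes
`C₁⁺⁺, C₁⁻⁺, C₂⁺⁺, C₂⁻⁺, C₃⁺⁺` (columns): the column of `Cᵢ` has its only `1` in the row of `Dᵢ`. -/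
def incidenceDC (R : Type*) [Zero R] [One R] : Matrix (Fin 3) (Fin 5) R :=
  !![1, 1, 0, 0, 0;
     0, 0, 1, 1, 0;
     0, 0, 0, 0, 1]

section IncidenceDC

variable {R : Type*}

theorem incidenceDC_map_intCast [Ring R] :
    (incidenceDC ℤ).map (Int.cast : ℤ → R) = incidenceDC R := by
  ext i j
  fin_cases i <;> fin_cases j <;> simp [incidenceDC]

theorem incidenceDC_mulVec [NonAssocSemiring R] (b : Fin 5 → R) :
    incidenceDC R *ᵥ b = ![b 0 + b 1, b 2 + b 3, b 4] := by
  ext i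
  fin_cases i <;> simp [incidenceDC, mulVec, dotProduct, Fin.sum_univ_five]

theorem mem_ker_incidenceDC_iff [CommRing R] {b : Fin 5 → R} :
    b ∈ LinearMap.ker (incidenceDC R).mulVecLin ↔ b 1 = -b 0 ∧ b 3 = -b 2 ∧ b 4 = 0 := by
  simp [incidenceDC_mulVec, funext_iff, Fin.forall_fin_succ, eq_neg_iff_add_eq_zero, add_comm]

/-- A vector in the kernel of `incidenceDC R` has the form `(s, -s, t, -t, 0)`; this is the
isomorphism sending it to `(s, t)`. -/
def kerIncidenceDCEquiv [CommRing R] :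
    LinearMap.ker (incidenceDC R).mulVecLin ≃ₗ[R] R × R where
  toFun b := (b.1 0, b.1 2)
  map_add' _ _ := rfl
  map_smul' _ _ := rfl
  invFun c := ⟨![c.1, -c.1, c.2, -c.2, 0], mem_ker_incidenceDC_iff.mpr (by simp)⟩
  left_inv := by
    rintro ⟨b, hb⟩
    obtain ⟨h₁, h₃, h₄⟩ := mem_ker_incidenceDC_iff.mp hb
    ext i
    fin_cases i <;> simp [h₁, h₃, h₄]
  right_inv _ := rfl

end IncidenceDC

/-- The decomposition of `R⁸` into its first three and its last five coordinates. -/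
def splitThreeFive (R : Type*) [Semiring R] : (Fin 8 → R) ≃ₗ[R] (Fin 3 → R) × (Fin 5 → R) :=
  (LinearEquiv.funCongrLeft R R (finSumFinEquiv (m := 3) (n := 5))).trans
    (LinearEquiv.sumArrowLequivProdArrow (Fin 3) (Fin 5) R R)

theorem splitThreeFive_apply {R : Type*} [Semiring R] (x : Fin 8 → R) :
    splitThreeFive R x = (![x 0, x 1, x 2], ![x 3, x 4, x 5, x 6, x 7]) := by
  ext i <;> fin_cases i <;> rfl

/-- Galois cohomology computation in Theorem 4.7. Let `σ` be the
`ℤ`-linear endomorphism of `M = ℤ⁸` fixing `e₁, e₂, e₃` and sending `e₄ ↦ e₁ − e₄`,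
`e₅ ↦ e₁ − e₅`, `e₆ ↦ e₂ − e₆`, `e₇ ↦ e₂ − e₇`, `e₈ ↦ e₃ − e₈`. Then `σ ∘ σ = id` and
`ker(1 + σ)/im(1 − σ) ≅ (ℤ/2ℤ)²`. -/
theorem stmt12 (σ : Module.End ℤ (Fin 8 → ℤ))
    (h1 : σ (Pi.single 0 1) = Pi.single 0 1)
    (h2 : σ (Pi.single 1 1) = Pi.single 1 1)
    (h3 : σ (Pi.single 2 1) = Pi.single 2 1)
    (h4 : σ (Pi.single 3 1) = Pi.single 0 1 - Pi.single 3 1)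
    (h5 : σ (Pi.single 4 1) = Pi.single 0 1 - Pi.single 4 1)
    (h6 : σ (Pi.single 5 1) = Pi.single 1 1 - Pi.single 5 1)
    (h7 : σ (Pi.single 6 1) = Pi.single 1 1 - Pi.single 6 1)
    (h8 : σ (Pi.single 7 1) = Pi.single 2 1 - Pi.single 7 1) :
    σ ∘ₗ σ = LinearMap.id ∧
    Nonempty
      ((LinearMap.ker (1 + σ) ⧸
          (LinearMap.range (1 - σ)).comap (LinearMap.ker (1 + σ)).subtype) ≃+
        (ZMod 2 × ZMod 2)) := by
  have hσ : IsNegShear σ (splitThreeFive ℤ) (incidenceDC ℤ).mulVecLin := by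
    refine .of_basis (Pi.basisFun ℤ (Fin 8)) fun i ↦ ?_
    rw [Pi.basisFun_apply]
    fin_cases i <;>
      simp [h1, h2, h3, h4, h5, h6, h7, h8, splitThreeFive_apply, incidenceDC_mulVec]
  refine ⟨hσ.comp_self, ⟨hσ.involutionH1Equiv.toAddEquiv.trans ?_⟩⟩
  rw [incidenceDC_map_intCast]
  exact kerIncidenceDCEquiv.toAddEquiv
end

section
/- Over the field 𝔽₇ with 7 elements, the number of triples of points ([x:r], [y:s], [z:t]) ∈ ℙ¹(𝔽₇) × ℙ¹(𝔽₇) × ℙ¹(𝔽₇) at which the (2,2,2)-form (x²−r²)(y²−s²)(z²−t²) − (xyz + 3rst)² − (rst)² vanishes is exactly 43. -/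
/-- The `(2,2,2)`-form `(x²−r²)(y²−s²)(z²−t²) − (xyz + 3rst)² − (rst)²` evaluated at
representatives `a = (x,r)`, `b = (y,s)`, `c = (z,t)`. -/
def MK3Form {K : Type*} [Field K] (a b c : Fin 2 → K) : K :=
  (a 0 ^ 2 - a 1 ^ 2) * (b 0 ^ 2 - b 1 ^ 2) * (c 0 ^ 2 - c 1 ^ 2) -
    (a 0 * b 0 * c 0 + 3 * (a 1 * b 1 * c 1)) ^ 2 - (a 1 * b 1 * c 1) ^ 2

instance : Fact (Nat.Prime 7) := ⟨by norm_num⟩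

/-!
A point of `ℙ¹` is either `[t : 1]` or `∞ = [1 : 0]`, so `ℙ¹ × ℙ¹ × ℙ¹` is stratified by which
coordinates are infinite. Over any field the form becomes `(x²−1)(y²−1)(z²−1) − (xyz+3)² − 1` on the
affine stratum, `1 − x² − y²` when one coordinate is infinite, `−1` when two are, and `0` at
`(∞, ∞, ∞)`. A finite field therefore contributes the affine points, three copies of the conic
`x² + y² = 1`, and one more point; over `𝔽₇` this is `18 + 3 · 8 + 1`.
-/

open OnePoint

section Field

variable {K : Type*} [Field K]

theorem MK3Form_smul (u v w : K) (a b c : Fin 2 → K) :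
    MK3Form (u • a) (v • b) (w • c) = (u * v * w) ^ 2 * MK3Form a b c := by
  simp only [MK3Form, Pi.smul_apply, smul_eq_mul]
  ring

theorem MK3Form_rotate (a b c : Fin 2 → K) : MK3Form a b c = MK3Form b c a := by
  simp only [MK3Form]
  ring

theorem MK3Form_rep_mk_eq_zero_iff {a b c : Fin 2 → K} (ha : a ≠ 0) (hb : b ≠ 0) (hc : c ≠ 0) :
    MK3Form (Projectivization.mk K a ha).rep (Projectivization.mk K b hb).rep
      (Projectivization.mk K c hc).rep = 0 ↔ MK3Form a b c = 0 := by
  obtain ⟨u, hu⟩ := Projectivization.exists_smul_eq_mk_rep K a ha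
  obtain ⟨v, hv⟩ := Projectivization.exists_smul_eq_mk_rep K b hb
  obtain ⟨w, hw⟩ := Projectivization.exists_smul_eq_mk_rep K c hc
  simp [← hu, ← hv, ← hw, Units.smul_def, MK3Form_smul]

/-- Homogeneous coordinates on the projective line `K ∪ {∞}`: `(t, 1)` at a finite point `t` and
`(1, 0)` at `∞`. These are the vectors underlying `OnePoint.equivProjectivization`. -/
def homogeneousCoords (p : OnePoint K) : Fin 2 → K :=
  p.elim ![1, 0] fun t => ![t, 1]

theorem homogeneousCoords_infty : homogeneousCoords (∞ : OnePoint K) = ![1, 0] := rfl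

theorem homogeneousCoords_coe (t : K) : homogeneousCoords (t : OnePoint K) = ![t, 1] := rfl

theorem homogeneousCoords_ne_zero (p : OnePoint K) : homogeneousCoords p ≠ 0 := by
  cases p <;> simp [homogeneousCoords_infty, homogeneousCoords_coe]

theorem equivProjectivization_eq_mk_homogeneousCoords [DecidableEq K] (p : OnePoint K) :
    equivProjectivization K p =
      Projectivization.mk K (homogeneousCoords p) (homogeneousCoords_ne_zero p) := by
  cases p <;> rfl

variable (K) in
/-- The `(2,2,2)`-form as a function on triples of points of `K ∪ {∞}`, read in the coordinates
`homogeneousCoords`. By homogeneity its zeros are those of the form on `ℙ¹ × ℙ¹ × ℙ¹`. -/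
def MK3FormAt (p q r : OnePoint K) : K :=
  MK3Form (homogeneousCoords p) (homogeneousCoords q) (homogeneousCoords r)

theorem MK3FormAt_rotate (p q r : OnePoint K) : MK3FormAt K p q r = MK3FormAt K q r p :=
  MK3Form_rotate _ _ _

theorem MK3FormAt_coe_coe_coe (x y z : K) :
    MK3FormAt K x y z =
      (x ^ 2 - 1) * (y ^ 2 - 1) * (z ^ 2 - 1) - (x * y * z + 3) ^ 2 - 1 := by
  simp [MK3FormAt, MK3Form, homogeneousCoords_coe]

theorem MK3FormAt_coe_coe_infty (x y : K) : MK3FormAt K x y ∞ = 1 - x ^ 2 - y ^ 2 := by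
  simp only [MK3FormAt, MK3Form, homogeneousCoords_coe, homogeneousCoords_infty,
    Matrix.cons_val_zero, Matrix.cons_val_one]
  ring

theorem MK3FormAt_coe_infty_infty (x : K) : MK3FormAt K x ∞ ∞ = -1 := by
  simp [MK3FormAt, MK3Form, homogeneousCoords_coe, homogeneousCoords_infty]

theorem MK3FormAt_infty_infty_infty : MK3FormAt K ∞ ∞ ∞ = 0 := by
  simp [MK3FormAt, MK3Form, homogeneousCoords_infty]

theorem MK3FormAt_coe_infty_coe (x z : K) : MK3FormAt K x ∞ z = 1 - x ^ 2 - z ^ 2 := by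
  rw [← MK3FormAt_rotate, MK3FormAt_coe_coe_infty, sub_right_comm]

theorem MK3FormAt_infty_coe_coe (y z : K) : MK3FormAt K ∞ y z = 1 - y ^ 2 - z ^ 2 := by
  rw [MK3FormAt_rotate, MK3FormAt_coe_coe_infty]

theorem MK3FormAt_infty_coe_infty (y : K) : MK3FormAt K ∞ y ∞ = -1 := by
  rw [MK3FormAt_rotate, MK3FormAt_coe_infty_infty]

theorem MK3FormAt_infty_infty_coe (z : K) : MK3FormAt K ∞ ∞ z = -1 := by
  rw [← MK3FormAt_rotate, MK3FormAt_coe_infty_infty]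

end Field

section Fintype

theorem sum_onePoint {X M : Type*} [Fintype X] [AddCommMonoid M] (f : OnePoint X → M) :
    ∑ p, f p = f ∞ + ∑ x : X, f x :=
  Fintype.sum_option f

variable (K : Type*) [Field K] [Fintype K] [DecidableEq K]

theorem ncard_MK3Form_rep_eq_zero :
    Set.ncard {P : Projectivization K (Fin 2 → K) × Projectivization K (Fin 2 → K) ×
        Projectivization K (Fin 2 → K) | MK3Form P.1.rep P.2.1.rep P.2.2.rep = 0} =
      Fintype.card {p : OnePoint K × OnePoint K × OnePoint K //
        MK3FormAt K p.1 p.2.1 p.2.2 = 0} := by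
  let e := equivProjectivization K
  rw [← Nat.card_coe_set_eq, ← Nat.card_eq_fintype_card]
  refine (Nat.card_congr ((e.prodCongr (e.prodCongr e)).subtypeEquiv fun p => ?_)).symm
  simp only [Equiv.prodCongr_apply, Prod.map, e, equivProjectivization_eq_mk_homogeneousCoords,
    Set.mem_ofPred_eq, MK3Form_rep_mk_eq_zero_iff, MK3FormAt]

theorem card_MK3FormAt_eq_zero :
    Fintype.card {p : OnePoint K × OnePoint K × OnePoint K // MK3FormAt K p.1 p.2.1 p.2.2 = 0} =
      Fintype.card {p : K × K × K // (p.1 ^ 2 - 1) * (p.2.1 ^ 2 - 1) * (p.2.2 ^ 2 - 1) -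
        (p.1 * p.2.1 * p.2.2 + 3) ^ 2 - 1 = 0} +
      3 * Fintype.card {p : K × K // p.1 ^ 2 + p.2 ^ 2 = 1} + 1 := by
  have on_conic_iff (x y : K) : 1 - x ^ 2 - y ^ 2 = 0 ↔ x ^ 2 + y ^ 2 = 1 := by
    rw [sub_sub, sub_eq_zero, eq_comm]
  simp only [Fintype.card_subtype, Finset.card_filter, Fintype.sum_prod_type, sum_onePoint,
    Finset.sum_add_distrib, MK3FormAt_coe_coe_coe, MK3FormAt_coe_coe_infty,
    MK3FormAt_coe_infty_coe, MK3FormAt_infty_coe_coe, MK3FormAt_coe_infty_infty,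
    MK3FormAt_infty_coe_infty, MK3FormAt_infty_infty_coe, MK3FormAt_infty_infty_infty,
    on_conic_iff, neg_eq_zero, one_ne_zero, if_true, if_false, Finset.sum_const_zero]
  ring

end Fintype

/- By hand: `−1` is not a square mod `7`, so no coordinate is `±1`; running through `0`, `±2`, `±3`
leaves the `6` rearrangements of `(0, 0, ±2)` and the `12` rearrangements of `(±2, ±2, ±3)` with
`xyz = −2`. -/
theorem card_affine_MK3_zmod_seven :
    Fintype.card {p : ZMod 7 × ZMod 7 × ZMod 7 // (p.1 ^ 2 - 1) * (p.2.1 ^ 2 - 1) *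
      (p.2.2 ^ 2 - 1) - (p.1 * p.2.1 * p.2.2 + 3) ^ 2 - 1 = 0} = 18 := by
  decide +kernel

theorem card_sq_add_sq_eq_one_zmod_seven :
    Fintype.card {p : ZMod 7 × ZMod 7 // p.1 ^ 2 + p.2 ^ 2 = 1} = 8 := by
  decide

/-- point count in Proposition 4.3. The `(2,2,2)`-form
`(x²−r²)(y²−s²)(z²−t²) − (xyz + 3rst)² − (rst)²` vanishes at exactly `43` points of
`ℙ¹ × ℙ¹ × ℙ¹` over `𝔽₇`. Since the form is homogeneous of degree 2 in each pair of
coordinates, its vanishing is independent of the chosen representatives. -/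
theorem stmt14 :
    Set.ncard {P : Projectivization (ZMod 7) (Fin 2 → ZMod 7) ×
        Projectivization (ZMod 7) (Fin 2 → ZMod 7) ×
        Projectivization (ZMod 7) (Fin 2 → ZMod 7) |
      MK3Form P.1.rep P.2.1.rep P.2.2.rep = 0} = 43 := by
  rw [ncard_MK3Form_rep_eq_zero, card_MK3FormAt_eq_zero,
    card_affine_MK3_zmod_seven, card_sq_add_sq_eq_one_zmod_seven]
end
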